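/- arXiv:1501.01489 — 2 statements merged into one kernel-verified Lean document; each statement's English description precedes it below -/
import Mathlib

section
/- With high probability, the uniformly random chord diagram C_n contains no block of ⌊5 log n⌋ consecutive endpoints (cyclically modulo 2n) that contains two chords (both with both endpoints in the block). Consequently, with high probability the random oriented chord diagram D_n has at most one strong component of size larger than 1 in its directed intersection graph. -/
open scoped Classical
open Finset Filter

/-- A chord diagram of size `n`: a fixed-point-free involution of the `2n`
endpoints `0, 1, …, 2n-1` (endpoint `i` here corresponds to the label `i+1`). -/
abbrev ChordDiagram (n : ℕ) :=
  {f : Fin (2*n) → Fin (2*n) // (∀ i, f (f i) = i) ∧ ∀ i, f i ≠ i}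

/-- `c` lies strictly between `a` and `b`. -/
def Between {m : ℕ} (a b c : Fin m) : Prop := min a b < c ∧ c < max a b

/-- The chord of `C` containing endpoint `x` crosses the chord containing endpoint `u`:
exactly one of the two endpoints `u`, `C u` lies strictly between `x` and `C x`. -/
def Crosses {n : ℕ} (C : ChordDiagram n) (x u : Fin (2*n)) : Prop :=
  Xor' (Between x (C.1 x) u) (Between x (C.1 x) (C.1 u))

/-- Uniform probability of an event over all chord diagrams of size `n`. -/
noncomputable def prob (n : ℕ) (E : ChordDiagram n → Prop) : ℝ :=
  ((Finset.univ.filter E).card : ℝ) / ((Finset.univ : Finset (ChordDiagram n)).card : ℝ)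

/-- The degree of the chord of `C` containing endpoint `x`: the number of chords
crossing it (each chord counted once via its smaller endpoint). -/
noncomputable def chordDegree {n : ℕ} (C : ChordDiagram n) (x : Fin (2*n)) : ℕ :=
  (Finset.univ.filter fun u => u < C.1 u ∧ Crosses C x u).card

/-- The length of the chord of `C` containing endpoint `x`: the number of endpoints
on the smaller of the two arcs it determines. -/
def chordLength {n : ℕ} (C : ChordDiagram n) (x : Fin (2*n)) : ℕ :=
  min (max (x:ℕ) (C.1 x : ℕ) - min (x:ℕ) (C.1 x : ℕ) - 1)
      (2*n - (max (x:ℕ) (C.1 x : ℕ) - min (x:ℕ) (C.1 x : ℕ)) - 1)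

/-- Degree of the chord containing endpoint `1` (index `0`). -/
noncomputable def degreeC1 (n : ℕ) (C : ChordDiagram n) : ℕ :=
  if h : 0 < n then chordDegree C ⟨0, by omega⟩ else 0

/-- Length of the chord containing endpoint `1` (index `0`). -/
noncomputable def lengthC1 (n : ℕ) (C : ChordDiagram n) : ℕ :=
  if h : 0 < n then chordLength C ⟨0, by omega⟩ else 0

/-- Membership in the component (w.r.t. the crossing relation) of the chord
containing the root endpoint. -/
def InRootComponent {n : ℕ} (C : ChordDiagram n) (root x : Fin (2*n)) : Prop :=
  x = root ∨ x = C.1 root ∨ Relation.ReflTransGen (fun a b => Crosses C a b) root x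

/-- The chord containing `x` is simple: it joins two (cyclically) consecutive endpoints. -/
def IsSimple {n : ℕ} (C : ChordDiagram n) (x : Fin (2*n)) : Prop :=
  (C.1 x : ℕ) = ((x : ℕ) + 1) % (2*n) ∨ (x : ℕ) = ((C.1 x : ℕ) + 1) % (2*n)

/-- `C` is monolithic (with respect to `root`): every chord not in the root
component is simple, and no two simple chords are next to each other. -/
def Monolithic {n : ℕ} (C : ChordDiagram n) (root : Fin (2*n)) : Prop :=
  (∀ x : Fin (2*n), ¬ InRootComponent C root x → IsSimple C x) ∧
  ¬ ∃ i : Fin (2*n), (C.1 i : ℕ) = ((i : ℕ) + 1) % (2*n) ∧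
      ∃ j : Fin (2*n), (j : ℕ) = ((i : ℕ) + 2) % (2*n) ∧ (C.1 j : ℕ) = ((i : ℕ) + 3) % (2*n)

/-- `L_j`: the number of chords of length `j` in `C`. -/
noncomputable def lengthCount (n : ℕ) (j : ℕ) (C : ChordDiagram n) : ℕ :=
  (Finset.univ.filter fun x : Fin (2*n) => x < C.1 x ∧ chordLength C x = j).card

/-- The endpoints of chords of `C` of length at least `k`. -/
noncomputable def lenAtLeast (n k : ℕ) (C : ChordDiagram n) : Finset (Fin (2*n)) :=
  Finset.univ.filter fun x => k ≤ chordLength C x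

/-- The number of chords with endpoints in `S` crossing the chord containing `x`. -/
noncomputable def degreeIn {n : ℕ} (C : ChordDiagram n) (S : Finset (Fin (2*n)))
    (x : Fin (2*n)) : ℕ :=
  (S.filter fun u => u < C.1 u ∧ Crosses C x u).card

/-- `S` (a chord-closed set of endpoints) is a set of chords each crossing at
least `k` other chords of `S`. -/
def IsCore {n : ℕ} (C : ChordDiagram n) (k : ℕ) (S : Finset (Fin (2*n))) : Prop :=
  (∀ x ∈ S, C.1 x ∈ S) ∧ ∀ x ∈ S, k ≤ degreeIn C S x

/-- The `k`-core: the union of all sets of chords in which every chord crosses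
at least `k` other chords of the set. -/
noncomputable def kCore (n k : ℕ) (C : ChordDiagram n) : Finset (Fin (2*n)) :=
  Finset.univ.filter fun x => ∃ S : Finset (Fin (2*n)), IsCore C k S ∧ x ∈ S

/-- The number of chords in the `k`-core of `C`. -/
noncomputable def kCoreSize (n k : ℕ) (C : ChordDiagram n) : ℕ :=
  ((kCore n k C).filter fun x => x < C.1 x).card

/-- `Z_k`: the number of chords of length strictly less than `k`. -/
noncomputable def shortCount (n k : ℕ) (C : ChordDiagram n) : ℕ :=
  (Finset.univ.filter fun x : Fin (2*n) => x < C.1 x ∧ chordLength C x < k).card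

/-- `C` contains a balanced clique of size `m`: a set of `m` pairwise crossing
chords with exactly one endpoint in each of the `2m` blocks of length `⌊n/m⌋`. -/
def HasBalancedClique (n m : ℕ) (C : ChordDiagram n) : Prop :=
  ∃ S : Finset (Fin (2*n)),
    (∀ x ∈ S, C.1 x ∈ S) ∧
    (∀ x ∈ S, ∀ u ∈ S, u ≠ x → u ≠ C.1 x → Crosses C x u) ∧
    (∀ t : ℕ, 1 ≤ t → t ≤ 2*m →
      (S.filter fun x => (t-1) * (n/m) ≤ (x:ℕ) ∧ (x:ℕ) < t * (n/m)).card = 1)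

/-- An oriented chord diagram: a chord diagram together with auxiliary fair-coin
bits; the bit attached to a crossing pair of chords (indexed by their smaller
endpoints) decides which chord over-crosses the other. -/
abbrev OrientedChordDiagram (n : ℕ) := ChordDiagram n × (Fin (2*n) → Fin (2*n) → Bool)

/-- The smaller endpoint of the chord of `C` containing `x`. -/
def chordRep {n : ℕ} (C : ChordDiagram n) (x : Fin (2*n)) : Fin (2*n) := min x (C.1 x)

/-- In the oriented diagram `D`, the chord containing `x` crosses and
over-crosses the chord containing `u`. -/
def OverD {n : ℕ} (D : OrientedChordDiagram n) (x u : Fin (2*n)) : Prop :=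
  Crosses D.1 x u ∧
    ((chordRep D.1 x ≤ chordRep D.1 u ∧ D.2 (chordRep D.1 x) (chordRep D.1 u) = true) ∨
     (chordRep D.1 u < chordRep D.1 x ∧ D.2 (chordRep D.1 u) (chordRep D.1 x) = false))

/-- Uniform probability of an event over all oriented chord diagrams of size `n`
(this yields a uniformly random diagram with each crossing oriented by an
independent fair coin). -/
noncomputable def probD (n : ℕ) (E : OrientedChordDiagram n → Prop) : ℝ :=
  ((Finset.univ.filter E).card : ℝ) /
    ((Finset.univ : Finset (OrientedChordDiagram n)).card : ℝ)

/-- The chords (given by their endpoints in `S`) are strongly connected in the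
directed intersection graph of `D`, using only chords of `S`. -/
def StronglyConnectedIn {n : ℕ} (D : OrientedChordDiagram n) (S : Set (Fin (2*n))) : Prop :=
  ∀ c ∈ S, ∀ d ∈ S,
    Relation.ReflTransGen (fun a b => a ∈ S ∧ b ∈ S ∧ OverD D a b) c d

/-- The number of chords with both endpoints in the cyclic block
`{i, i+1, …, i+t-1}` (mod `2n`). -/
noncomputable def chordsInBlock (n : ℕ) (C : ChordDiagram n) (i t : ℕ) : ℕ :=
  (Finset.univ.filter fun x : Fin (2*n) => x < C.1 x ∧
    (∃ a < t, (x:ℕ) = (i + a) % (2*n)) ∧ (∃ a < t, ((C.1 x : ℕ)) = (i + a) % (2*n))).card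

/-- The chord of `x` reaches the chord of `u` in the directed intersection graph
(of the whole diagram); endpoints of the same chord represent the same vertex. -/
def ReachChord {n : ℕ} (D : OrientedChordDiagram n) (x u : Fin (2*n)) : Prop :=
  u = x ∨ u = D.1.1 x ∨ Relation.ReflTransGen (fun a b => OverD D a b) x u

/-- The chords of `x` and `u` lie in the same strong component. -/
def MutualReach {n : ℕ} (D : OrientedChordDiagram n) (x u : Fin (2*n)) : Prop :=
  ReachChord D x u ∧ ReachChord D u x

/-- The number of single-chord strong components of `D`. -/
noncomputable def singleCount (n : ℕ) (D : OrientedChordDiagram n) : ℕ :=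
  (Finset.univ.filter fun x : Fin (2*n) =>
    x < D.1.1 x ∧ ∀ u : Fin (2*n), u ≠ x → u ≠ D.1.1 x → ¬ MutualReach D x u).card

noncomputable def MM {N : ℕ} (V : Finset (Fin N)) : Finset (Fin N → Fin N) :=
  Finset.univ.filter (fun f => (∀ i, f (f i) = i) ∧ ∀ i, f i = i ↔ i ∉ V)

def extP {N : ℕ} (x y : Fin N) (g : Fin N → Fin N) : Fin N → Fin N :=
  fun z => if z = x then y else if z = y then x else g z

lemma MM_bij {N : ℕ} (V : Finset (Fin N)) (x y : Fin N) (hx : x ∈ V) (hy : y ∈ V) (hxy : x ≠ y)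
    (P : (Fin N → Fin N) → Prop) [DecidablePred (fun f => f x = y ∧ P f)]
    [DecidablePred (fun g => P (extP x y g))] :
    ((MM V).filter (fun f => f x = y ∧ P f)).card =
      ((MM ((V.erase x).erase y)).filter (fun g => P (extP x y g))).card := by
  have key : ∀ f ∈ MM V, f x = y →
      extP x y (fun z => if z = x ∨ z = y then z else f z) = f := by
    intro f hf h3
    simp only [MM, mem_filter, mem_univ, true_and] at hf
    obtain ⟨h1, h2⟩ := hf
    funext z
    simp only [extP]
    have := h1 x
    grind
  refine Finset.card_nbij' (fun f z => if z = x ∨ z = y then z else f z) (extP x y) ?_ ?_ ?_ ?_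
  · intro f hf
    have k := key f (Finset.mem_filter.mp (Finset.mem_coe.mp hf)).1 (Finset.mem_filter.mp (Finset.mem_coe.mp hf)).2.1
    simp only [coe_filter, MM, mem_filter, mem_univ, true_and, Set.mem_ofPred_eq] at hf ⊢
    rw [k]
    obtain ⟨⟨h1, h2⟩, h3, h4⟩ := hf
    refine ⟨⟨?_, ?_⟩, h4⟩
    · intro i
      have := h1 i
      have := h1 x
      grind
    · intro i
      have := h2 i
      simp only [mem_erase]
      grind
  · intro g hg
    simp only [coe_filter, MM, mem_filter, mem_univ, true_and, Set.mem_ofPred_eq, mem_erase] at hg ⊢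
    obtain ⟨⟨h1, h2⟩, h3⟩ := hg
    have gx : g x = x := by rw [h2]; tauto
    have gy : g y = y := by rw [h2]; tauto
    refine ⟨⟨?_, ?_⟩, ?_, h3⟩
    · intro i
      have := h1 i
      simp only [extP]
      grind
    · intro i
      have := h2 i
      simp only [extP]
      grind
    · simp [extP]
  · intro f hf; exact key f (Finset.mem_filter.mp (Finset.mem_coe.mp hf)).1 (Finset.mem_filter.mp (Finset.mem_coe.mp hf)).2.1
  · intro g hg
    simp only [coe_filter, MM, mem_filter, mem_univ, true_and, Set.mem_ofPred_eq, mem_erase] at hg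
    obtain ⟨⟨h1, h2⟩, h3⟩ := hg
    have gx : g x = x := by rw [h2]; tauto
    have gy : g y = y := by rw [h2]; tauto
    funext z
    simp only [extP]
    grind

lemma MM_sum {N : ℕ} (V : Finset (Fin N)) (x : Fin N) (hx : x ∈ V)
    (P : (Fin N → Fin N) → Prop) [DecidablePred P]
    [∀ y, DecidablePred (fun f => f x = y ∧ P f)] :
    ((MM V).filter P).card =
      ∑ y ∈ V.erase x, ((MM V).filter (fun f => f x = y ∧ P f)).card := by
  rw [Finset.card_eq_sum_card_fiberwise (f := fun f => f x) (t := V.erase x)]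
  · apply Finset.sum_congr rfl
    intro y hy
    rw [Finset.filter_filter]
    congr 1
    ext f; simp; tauto
  · intro f hf
    simp only [coe_filter, MM, mem_filter, mem_univ, true_and, Set.mem_ofPred_eq] at hf
    obtain ⟨⟨h1, h2⟩, h3⟩ := hf
    simp only [coe_erase, Set.mem_sdiff, mem_coe, Set.mem_singleton_iff]
    have a := h2 x
    have b := h2 (f x)
    have := h1 x
    grind

def FF : ℕ → ℕ
  | 0 => 1
  | 1 => 0
  | (s+2) => (s+1) * FF s

lemma card_erase2 {N : ℕ} (V : Finset (Fin N)) (x y : Fin N) (hx : x ∈ V) (hy : y ∈ V.erase x) :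
    ((V.erase x).erase y).card = V.card - 2 := by
  rw [Finset.card_erase_of_mem hy, Finset.card_erase_of_mem hx]; omega

lemma MM_card {N : ℕ} : ∀ (s : ℕ) (V : Finset (Fin N)), V.card = s → (MM V).card = FF s := by
  intro s
  induction s using Nat.strong_induction_on with
  | _ s ih =>
    intro V hV
    rcases Finset.eq_empty_or_nonempty V with rfl | ⟨x, hx⟩
    · simp at hV; subst hV
      simp only [FF]
      rw [Finset.card_eq_one]
      refine ⟨id, ?_⟩
      ext f
      simp only [MM, mem_filter, mem_univ, true_and, mem_singleton, notMem_empty, not_false_eq_true, iff_true]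
      constructor
      · rintro ⟨_, h⟩; funext i; exact h i
      · rintro rfl; simp
    · have h := MM_sum V x hx (fun _ => True)
      have h0 : 0 < V.card := Finset.card_pos.mpr ⟨x, hx⟩
      simp only [Finset.filter_true] at h
      rw [h]
      have : ∀ y ∈ V.erase x, ((MM V).filter (fun f => f x = y ∧ True)).card = FF (s-2) := by
        intro y hy
        rw [MM_bij V x y hx (Finset.mem_of_mem_erase hy) (Finset.ne_of_mem_erase hy).symm (fun _ => True)]
        simp only [Finset.filter_true]
        exact ih (s-2) (by omega) _ (by rw [card_erase2 V x y hx hy, hV])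
      rw [Finset.sum_congr rfl this, Finset.sum_const, Finset.card_erase_of_mem hx, hV]
      obtain _ | _ | s := s
      · omega
      · simp [FF]
      · simp [FF]

lemma MM_avoid {N : ℕ} (T : Finset (Fin N)) (β : ℝ) (hβ : β = 1 - (T.card : ℝ) / N) :
    ∀ (j : ℕ) (V S : Finset (Fin N)), S ⊆ V → T ⊆ V → Disjoint S T → 2 * j ≤ S.card →
    (((MM V).filter (fun f => ∀ x ∈ S, f x ∉ T)).card : ℝ) ≤ FF V.card * β ^ j := by
  intro j
  induction j with
  | zero =>
    intro V S _ _ _ _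
    simp only [pow_zero, mul_one]
    rw [← MM_card _ V rfl]
    exact_mod_cast Finset.card_filter_le _ _
  | succ j ih =>
    intro V S hSV hTV hST hj
    obtain ⟨x, hxS⟩ : S.Nonempty := by
      rw [← Finset.card_pos]; omega
    have hx := hSV hxS
    have hxT : x ∉ T := Finset.disjoint_left.mp hST hxS
    rw [MM_sum V x hx]
    have hV2 : 2 ≤ V.card := le_trans (by omega) (Finset.card_le_card hSV)
    have hVN : V.card ≤ N := by simpa using Finset.card_le_univ V
    have hTc : T.card ≤ N := by simpa using Finset.card_le_univ T
    have hN : (0:ℝ) < N := by exact_mod_cast (by omega : 0 < N)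
    have hβ0 : 0 ≤ β := by
      rw [hβ, sub_nonneg, div_le_one hN]; exact_mod_cast hTc
    push_cast
    have bound : ∀ y ∈ V.erase x, (((MM V).filter (fun f => f x = y ∧ ∀ x ∈ S, f x ∉ T)).card : ℝ)
        ≤ if y ∈ T then 0 else FF (V.card - 2) * β ^ j := by
      intro y hy
      split_ifs with hyT
      · rw [Finset.filter_false_of_mem]
        · simp
        · rintro f hf ⟨h1, h2⟩
          exact h2 x hxS (h1 ▸ hyT)
      · have hyV := Finset.mem_of_mem_erase hy
        have hxy := (Finset.ne_of_mem_erase hy).symm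
        rw [MM_bij V x y hx hyV hxy, ← card_erase2 V x y hx hy]
        refine le_trans ?_ (ih ((V.erase x).erase y) ((S.erase x).erase y) ?_ ?_ ?_ ?_)
        · norm_cast
          apply Finset.card_le_card
          intro g hg
          simp only [mem_filter, mem_erase] at hg ⊢
          refine ⟨hg.1, ?_⟩
          rintro z ⟨hz1, hz2, hz3⟩
          have := hg.2 z hz3
          simpa [extP, hz1, hz2] using this
        · exact Finset.erase_subset_erase _ (Finset.erase_subset_erase _ hSV)
        · intro z hz
          simp only [mem_erase]
          refine ⟨?_, ?_, hTV hz⟩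
          · rintro rfl; exact hyT hz
          · rintro rfl; exact hxT hz
        · exact Finset.disjoint_of_subset_left ((Finset.erase_subset _ _).trans (Finset.erase_subset _ _)) hST
        · have h1 : S.card - 1 = (S.erase x).card := (Finset.card_erase_of_mem hxS).symm
          have := Finset.pred_card_le_card_erase (s := S.erase x) (a := y)
          omega
    refine (Finset.sum_le_sum bound).trans ?_
    rw [Finset.sum_ite, Finset.sum_const_zero, zero_add, Finset.sum_const, nsmul_eq_mul]
    have hc : (((V.erase x).filter (fun y => y ∉ T)).card : ℝ) = V.card - 1 - T.card := by
      have h1 : ((V.erase x).filter (fun y => y ∉ T)) = (V.erase x) \ T := by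
        ext; simp
      have h2 : T ⊆ V.erase x := by
        intro z hz
        simp only [mem_erase]
        exact ⟨by rintro rfl; exact hxT hz, hTV hz⟩
      have h3 := Finset.card_sdiff_add_card_eq_card h2
      rw [h1]
      rw [Finset.card_erase_of_mem hx] at h3
      have h4 : ((V.erase x) \ T).card + T.card + 1 = V.card := by omega
      rw [← h4]; push_cast; ring
    rw [hc]
    have hF : (FF V.card : ℝ) = (V.card - 1) * FF (V.card - 2) := by
      obtain ⟨s, hs⟩ : ∃ s, V.card = s + 2 := ⟨V.card - 2, by omega⟩
      rw [hs]; simp [FF]; left; ring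
    rw [hF, pow_succ]
    have h5 : ((V.card : ℝ) - 1 - T.card) ≤ β * (V.card - 1) := by
      have : ((V.card:ℝ) - 1) ≤ N := by
        have : (V.card : ℝ) ≤ N := by exact_mod_cast hVN
        linarith
      have h6 : (T.card : ℝ) / N * (V.card - 1) ≤ T.card := by
        rw [div_mul_eq_mul_div, div_le_iff₀ hN]
        gcongr
      rw [hβ]; linarith
    have h7 : (0:ℝ) ≤ FF (V.card - 2) * β ^ j := by positivity
    nlinarith

lemma MM_pair {N : ℕ} (a b c d : Fin N) (hab : a ≠ b) (hac : a ≠ c) (had : a ≠ d) (hbc : b ≠ c)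
    (hbd : b ≠ d) (hcd : c ≠ d) :
    ((MM (univ : Finset (Fin N))).filter (fun f => f a = b ∧ f c = d)).card = FF (N - 4) := by
  rw [MM_bij univ a b (mem_univ _) (mem_univ _) hab]
  rw [Finset.filter_congr (q := fun g => g c = d ∧ True)
    (by intro g _; simp [extP, hac.symm, hbc.symm]), MM_bij _ c d _ _ hcd]
  · simp only [Finset.filter_true]
    apply MM_card
    rw [card_erase2, card_erase2]
    · simp; omega
    · simp
    · simp [hab.symm]
    · simp [hac.symm, hbc.symm]
    · simp [hac.symm, had.symm, hbc.symm, hbd.symm, hcd.symm]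
  · simp [hac.symm, hbc.symm]
  · simp [had.symm, hbd.symm]

lemma FF_even_pos : ∀ n, 0 < FF (2*n) := by
  intro n
  induction n with
  | zero => simp [FF]
  | succ n ih =>
    show 0 < FF (2*n+2)
    simp only [FF]; positivity

lemma CD_card {n : ℕ} (P : (Fin (2*n) → Fin (2*n)) → Prop) [DecidablePred P]
    [DecidablePred (fun C : ChordDiagram n => P C.1)] :
    ((univ : Finset (ChordDiagram n)).filter (fun C => P C.1)).card
      = ((MM (univ : Finset (Fin (2*n)))).filter P).card := by
  apply Finset.card_bij (fun C _ => C.1)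
  · intro C hC
    simp only [mem_filter, mem_univ, true_and] at hC
    simp only [MM, mem_filter, mem_univ, true_and, not_true_eq_false, iff_false]
    exact ⟨⟨C.2.1, C.2.2⟩, hC⟩
  · intro C _ C' _ h; exact Subtype.ext h
  · intro f hf
    simp only [MM, mem_filter, mem_univ, true_and, not_true_eq_false, iff_false] at hf
    exact ⟨⟨f, hf.1.1, hf.1.2⟩, by simpa using hf.2, rfl⟩

lemma CD_total (n : ℕ) : (univ : Finset (ChordDiagram n)).card = FF (2*n) := by
  have := CD_card (n := n) (fun _ => True)
  simp only [Finset.filter_true] at this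
  rw [this]
  exact MM_card _ _ (by simp)

lemma chordsInBlock_two {n : ℕ} {C : ChordDiagram n} {i t : ℕ} (h : 2 ≤ chordsInBlock n C i t) :
    ∃ a b : Fin (2*n), ∃ c d : Fin (2*n), a ≠ b ∧ a ≠ c ∧ a ≠ d ∧ b ≠ c ∧ b ≠ d ∧ c ≠ d ∧
      C.1 a = b ∧ C.1 c = d ∧ (∃ o < t, (a:ℕ) = (i + o) % (2*n)) ∧ (∃ o < t, (b:ℕ) = (i + o) % (2*n))
      ∧ (∃ o < t, (c:ℕ) = (i + o) % (2*n)) ∧ (∃ o < t, (d:ℕ) = (i + o) % (2*n)) := by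
  unfold chordsInBlock at h
  obtain ⟨a, ha, c, hc, hac⟩ := Finset.one_lt_card.mp (show 1 < _ from h)
  simp only [mem_filter, mem_univ, true_and] at ha hc
  have h1 := C.2.1 a
  have h2 := C.2.1 c
  refine ⟨a, C.1 a, c, C.1 c, ha.1.ne, hac, ?_, ?_, ?_, hc.1.ne, rfl, rfl, ha.2.1, ha.2.2, hc.2.1, hc.2.2⟩
  · rintro h; have := ha.1; have := hc.1; rw [h, h2] at ha; exact absurd ha.1 (by rw [← h]; exact not_lt.mpr (h ▸ hc.1.le))
  · rintro h; rw [← h, h1] at hc; exact absurd hc.1 (not_lt.mpr ha.1.le)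
  · rintro h; apply hac; rw [← h1, h, h2]

lemma bad1_card (n R : ℕ) :
    ((univ : Finset (ChordDiagram n)).filter (fun C => ∃ s < 2*n, 2 ≤ chordsInBlock n C s R)).card
      ≤ 2*n * R^4 * FF (2*n-4) := by
  let I := range (2*n) ×ˢ range R ×ˢ range R ×ˢ range R ×ˢ range R
  let G : ℕ × ℕ × ℕ × ℕ × ℕ → Finset (ChordDiagram n) := fun o =>
    univ.filter (fun C => ∃ a b c d : Fin (2*n), a ≠ b ∧ a ≠ c ∧ a ≠ d ∧ b ≠ c ∧ b ≠ d ∧ c ≠ d ∧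
      C.1 a = b ∧ C.1 c = d ∧ (a:ℕ) = (o.1 + o.2.1) % (2*n) ∧ (b:ℕ) = (o.1 + o.2.2.1) % (2*n)
      ∧ (c:ℕ) = (o.1 + o.2.2.2.1) % (2*n) ∧ (d:ℕ) = (o.1 + o.2.2.2.2) % (2*n))
  have hI : I.card = 2*n * R^4 := by
    simp only [I, card_product, card_range]; ring
  rw [← hI]
  refine le_trans (Finset.card_le_card (t := I.biUnion G) ?_) (Finset.card_biUnion_le_card_mul _ _ _ ?_)
  · intro C hC
    simp only [mem_filter, mem_univ, true_and] at hC
    obtain ⟨s, hs, h⟩ := hC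
    obtain ⟨a, b, c, d, h1, h2, h3, h4, h5, h6, h7, h8, ⟨o1, ho1, e1⟩, ⟨o2, ho2, e2⟩,
      ⟨o3, ho3, e3⟩, ⟨o4, ho4, e4⟩⟩ := chordsInBlock_two h
    rw [Finset.mem_biUnion]
    refine ⟨(s, o1, o2, o3, o4), by simp [I, hs, ho1, ho2, ho3, ho4], ?_⟩
    simp only [G, mem_filter, mem_univ, true_and]
    exact ⟨a, b, c, d, h1, h2, h3, h4, h5, h6, h7, h8, e1, e2, e3, e4⟩
  · rintro o -
    by_cases hG : (G o).Nonempty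
    · obtain ⟨C, hC⟩ := hG
      simp only [G, mem_filter, mem_univ, true_and] at hC
      obtain ⟨a, b, c, d, h1, h2, h3, h4, h5, h6, -, -, e1, e2, e3, e4⟩ := hC
      rw [← MM_pair a b c d h1 h2 h3 h4 h5 h6, ← CD_card]
      apply Finset.card_le_card
      intro C hC
      simp only [G, mem_filter, mem_univ, true_and] at hC ⊢
      obtain ⟨a', b', c', d', -, -, -, -, -, -, h7, h8, e1', e2', e3', e4'⟩ := hC
      have ea : a' = a := Fin.ext (e1'.trans e1.symm)
      have eb : b' = b := Fin.ext (e2'.trans e2.symm)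
      have ec : c' = c := Fin.ext (e3'.trans e3.symm)
      have ed : d' = d := Fin.ext (e4'.trans e4.symm)
      subst ea eb ec ed
      exact ⟨h7, h8⟩
    · rw [Finset.not_nonempty_iff_eq_empty.mp hG]; simp

/-- no chord between some pair of disjoint intervals -/
def Bad2 {n : ℕ} (m w : ℕ) (C : ChordDiagram n) : Prop :=
  ∃ u v : ℕ, u + 2*m ≤ 2*n ∧ v + w ≤ 2*n ∧ (u + 2*m ≤ v ∨ v + w ≤ u) ∧
    ∀ x : Fin (2*n), u ≤ (x:ℕ) → (x:ℕ) < u + 2*m → ¬ (v ≤ (C.1 x : ℕ) ∧ (C.1 x : ℕ) < v + w)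

noncomputable def ivl (N u k : ℕ) : Finset (Fin N) := univ.filter (fun x => u ≤ (x:ℕ) ∧ (x:ℕ) < u + k)

lemma ivl_card (N u k : ℕ) (h : u + k ≤ N) : (ivl N u k).card = k := by
  have : (ivl N u k).map Fin.valEmbedding = Finset.Ico u (u+k) := by
    ext x
    simp only [ivl, Finset.mem_map, mem_filter, mem_univ, true_and, Fin.valEmbedding_apply, mem_Ico]
    constructor
    · rintro ⟨a, h1, rfl⟩; exact h1
    · intro hx; exact ⟨⟨x, by omega⟩, hx, rfl⟩
  rw [← Finset.card_map Fin.valEmbedding, this]; simp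

lemma bad2_card (n m w : ℕ) (hw : w ≤ 2*n) :
    (((univ : Finset (ChordDiagram n)).filter (fun C => Bad2 m w C)).card : ℝ)
      ≤ (2*n+1)^2 * (FF (2*n) * (1 - (w:ℝ)/(2*n))^m) := by
  let I := ((range (2*n+1) ×ˢ range (2*n+1)).filter
    (fun o => o.1 + 2*m ≤ 2*n ∧ o.2 + w ≤ 2*n ∧ (o.1 + 2*m ≤ o.2 ∨ o.2 + w ≤ o.1)))
  let G : ℕ × ℕ → Finset (ChordDiagram n) := fun o =>
    univ.filter (fun C => ∀ x ∈ ivl (2*n) o.1 (2*m), C.1 x ∉ ivl (2*n) o.2 w)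
  have hI : (I.card : ℝ) ≤ (2*n+1)^2 := by
    have : I.card ≤ (2*n+1)^2 := by
      refine (Finset.card_filter_le _ _).trans ?_
      simp only [card_product, card_range]; rw [sq]
    exact_mod_cast this
  have h1 : ((univ : Finset (ChordDiagram n)).filter (fun C => Bad2 m w C)) ⊆ I.biUnion G := by
    intro C hC
    simp only [mem_filter, mem_univ, true_and] at hC
    obtain ⟨u, v, hu, hv, hd, h⟩ := hC
    rw [Finset.mem_biUnion]
    refine ⟨(u, v), ?_, ?_⟩
    · simp only [I, mem_filter, mem_product, mem_range]
      exact ⟨⟨by omega, by omega⟩, hu, hv, hd⟩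
    · simp only [G, ivl, mem_filter, mem_univ, true_and]
      exact fun x hx => h x hx.1 hx.2
  have h2 : ∀ o ∈ I, ((G o).card : ℝ) ≤ FF (2*n) * (1 - (w:ℝ)/(2*n))^m := by
    intro o ho
    simp only [I, mem_filter] at ho
    obtain ⟨-, hu, hv, hd⟩ := ho
    simp only [G]
    rw [CD_card (fun f => ∀ x ∈ ivl (2*n) o.1 (2*m), f x ∉ ivl (2*n) o.2 w)]
    have := MM_avoid (ivl (2*n) o.2 w) (1 - (w:ℝ)/(2*n))
      (by rw [ivl_card _ _ _ hv]; push_cast; ring) m univ (ivl (2*n) o.1 (2*m))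
      (Finset.subset_univ _) (Finset.subset_univ _) ?_ (by rw [ivl_card _ _ _ hu])
    · simpa using this
    · rw [Finset.disjoint_left]
      intro x hx hx'
      simp only [ivl, mem_filter, mem_univ, true_and] at hx hx'
      omega
  calc _ ≤ ((I.biUnion G).card : ℝ) := by exact_mod_cast Finset.card_le_card h1
    _ ≤ ∑ o ∈ I, ((G o).card : ℝ) := by exact_mod_cast Finset.card_biUnion_le
    _ ≤ ∑ o ∈ I, (FF (2*n) * (1 - (w:ℝ)/(2*n))^m) := Finset.sum_le_sum h2
    _ = I.card * (FF (2*n) * (1 - (w:ℝ)/(2*n))^m) := by rw [Finset.sum_const, nsmul_eq_mul]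
    _ ≤ _ := by
      rcases Finset.eq_empty_or_nonempty I with h | ⟨o, ho⟩
      · rw [h]; simp only [card_empty, Nat.cast_zero, zero_mul]
        have : (0:ℝ) ≤ 1 - (w:ℝ)/(2*n) := by
          rw [sub_nonneg]
          apply div_le_one_of_le₀
          · exact_mod_cast hw
          · positivity
        positivity
      · gcongr
        exact le_trans (Nat.cast_nonneg _) (h2 o ho)

lemma coin_bound {N : ℕ} {κ : Type} (p q : κ → Fin N × Fin N) (s t : κ → Bool) :
    ∀ E : Finset κ, (∀ e ∈ E, ∀ e' ∈ E, p e = p e' → e = e') →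
      (∀ e ∈ E, ∀ e' ∈ E, q e = q e' → e = e') → (∀ e ∈ E, ∀ e' ∈ E, p e ≠ q e') →
      4^E.card * ((univ : Finset (Fin N → Fin N → Bool)).filter
        (fun ω => ∀ e ∈ E, ¬ (ω (p e).1 (p e).2 = s e ∧ ω (q e).1 (q e).2 = t e))).card
        ≤ 3^E.card * (univ : Finset (Fin N → Fin N → Bool)).card := by
  intro E
  induction E using Finset.induction_on with
  | empty => intros; simp
  | insert a E ha ih =>
    intro h1 h2 h3
    have ih' := ih (fun e he e' he' => h1 e (mem_insert_of_mem he) e' (mem_insert_of_mem he'))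
      (fun e he e' he' => h2 e (mem_insert_of_mem he) e' (mem_insert_of_mem he'))
      (fun e he e' he' => h3 e (mem_insert_of_mem he) e' (mem_insert_of_mem he'))
    set A := (univ : Finset (Fin N → Fin N → Bool)).filter
        (fun ω => ∀ e ∈ E, ¬ (ω (p e).1 (p e).2 = s e ∧ ω (q e).1 (q e).2 = t e)) with hA
    set good := A.filter (fun ω => ω (p a).1 (p a).2 = s a ∧ ω (q a).1 (q a).2 = t a) with hgood
    set bad := A.filter (fun ω => ¬ (ω (p a).1 (p a).2 = s a ∧ ω (q a).1 (q a).2 = t a)) with hbad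
    have hsplit : good.card + bad.card = A.card := Finset.card_filter_add_card_filter_not _
    have e1 : (univ : Finset (Fin N → Fin N → Bool)).filter
        (fun ω => ∀ e ∈ insert a E, ¬ (ω (p e).1 (p e).2 = s e ∧ ω (q e).1 (q e).2 = t e)) = bad := by
      ext ω
      simp only [hbad, hA, mem_filter, mem_univ, true_and, mem_insert, forall_eq_or_imp]
      tauto
    have hpq : p a ≠ q a := h3 a (mem_insert_self _ _) a (mem_insert_self _ _)
    have h4 : A.card ≤ 4 * good.card := by
      let φ : (Fin N → Fin N → Bool) → (Fin N → Fin N → Bool) := fun ω i j =>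
        if (i, j) = p a then s a else if (i, j) = q a then t a else ω i j
      have hmap : ∀ ω ∈ A, φ ω ∈ good := by
        intro ω hω
        simp only [hgood, hA, mem_filter, mem_univ, true_and] at hω ⊢
        refine ⟨?_, by simp [φ], by simp [φ, hpq.symm]⟩
        intro e he
        have hm := mem_insert_of_mem (b := a) he
        have hea : e ≠ a := by rintro rfl; exact ha he
        have n1 : p e ≠ p a := fun h => hea (h1 e hm a (mem_insert_self _ _) h)
        have n2 : q e ≠ q a := fun h => hea (h2 e hm a (mem_insert_self _ _) h)
        have n3 : p e ≠ q a := h3 e hm a (mem_insert_self _ _)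
        have n4 : q e ≠ p a := (h3 a (mem_insert_self _ _) e hm).symm
        simpa [φ, n1, n2, n3, n4] using hω e he
      refine Finset.card_le_mul_card_image_of_maps_to (f := φ) hmap 4 ?_
      intro η _
      refine le_trans (Finset.card_le_card_of_injOn (t := (univ : Finset (Bool × Bool)))
        (fun ω => (ω (p a).1 (p a).2, ω (q a).1 (q a).2)) (fun _ _ => by simp) ?_) (by simp)
      intro ω hω ω' hω' heq
      simp only [coe_filter, Set.mem_ofPred_eq] at hω hω'
      simp only [Prod.mk.injEq] at heq
      have h5 : φ ω = φ ω' := hω.2.trans hω'.2.symm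
      funext i j
      have h6 := congrFun (congrFun h5 i) j
      by_cases c1 : (i, j) = p a
      · rw [← c1] at heq; exact heq.1
      · by_cases c2 : (i, j) = q a
        · rw [← c2] at heq; exact heq.2
        · simpa [φ, c1, c2] using h6
    rw [e1, Finset.card_insert_of_notMem ha, pow_succ, pow_succ]
    have : 4 * bad.card ≤ 3 * A.card := by omega
    calc 4^E.card * 4 * bad.card = 4^E.card * (4 * bad.card) := by ring
      _ ≤ 4^E.card * (3 * A.card) := by gcongr
      _ = 3 * (4^E.card * A.card) := by ring
      _ ≤ 3 * (3^E.card * (univ : Finset (Fin N → Fin N → Bool)).card) := by gcongr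
      _ = _ := by ring

lemma C_inj {n : ℕ} (C : ChordDiagram n) {x y : Fin (2*n)} (h : C.1 x = C.1 y) : x = y := by
  rw [← C.2.1 x, h, C.2.1 y]

lemma crosses_left {n : ℕ} (C : ChordDiagram n) (x u : Fin (2*n)) :
    Crosses C (C.1 x) u ↔ Crosses C x u := by
  unfold Crosses Between
  rw [C.2.1 x, min_comm, max_comm]

lemma crosses_iff {n : ℕ} (C : ChordDiagram n) (x u : Fin (2*n)) : Crosses C x u ↔
    ((min (x:ℕ) (C.1 x) < u ∧ (u:ℕ) < max (x:ℕ) (C.1 x)) ∧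
      ¬ (min (x:ℕ) (C.1 x) < (C.1 u : ℕ) ∧ (C.1 u : ℕ) < max (x:ℕ) (C.1 x))) ∨
    ((min (x:ℕ) (C.1 x) < (C.1 u : ℕ) ∧ (C.1 u : ℕ) < max (x:ℕ) (C.1 x)) ∧
      ¬ (min (x:ℕ) (C.1 x) < u ∧ (u:ℕ) < max (x:ℕ) (C.1 x))) := by
  rw [← Fin.coe_min, ← Fin.coe_max]
  exact Iff.rfl

lemma crosses_right {n : ℕ} (C : ChordDiagram n) (x u : Fin (2*n)) :
    Crosses C x (C.1 u) ↔ Crosses C x u := by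
  rw [crosses_iff, crosses_iff, C.2.1 u]
  tauto

lemma crosses_ne {n : ℕ} {C : ChordDiagram n} {x u : Fin (2*n)} (h : Crosses C x u) :
    u ≠ x ∧ u ≠ C.1 x := by
  have h1 := C.2.1 x
  constructor
  · rintro rfl
    rw [crosses_iff] at h
    try rw [C.2.1] at h
    omega
  · rintro rfl
    rw [crosses_iff] at h
    try rw [C.2.1] at h
    omega

lemma crosses_symm {n : ℕ} {C : ChordDiagram n} {x u : Fin (2*n)} (h : Crosses C x u) :
    Crosses C u x := by
  obtain ⟨n1, n2⟩ := crosses_ne h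
  have n3 : C.1 u ≠ x := fun h => n2 (by rw [← h, C.2.1])
  have n4 : C.1 u ≠ C.1 x := fun h => n1 (C_inj C h)
  rw [crosses_iff] at h ⊢
  generalize C.1 x = y at *
  generalize C.1 u = v at *
  simp only [Fin.lt_def, Fin.ext_iff, ne_eq] at *
  omega

lemma chordRep_C {n : ℕ} (C : ChordDiagram n) (x : Fin (2*n)) :
    chordRep C (C.1 x) = chordRep C x := by
  unfold chordRep; rw [C.2.1, min_comm]

lemma chordRep_eq {n : ℕ} {C : ChordDiagram n} {x y : Fin (2*n)} (h : chordRep C x = chordRep C y) :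
    y = x ∨ y = C.1 x := by
  unfold chordRep at h
  rcases min_choice x (C.1 x) with h1 | h1 <;> rcases min_choice y (C.1 y) with h2 | h2 <;>
    rw [h1, h2] at h
  · exact Or.inl h.symm
  · right; rw [h, C.2.1]
  · exact Or.inr h.symm
  · left; exact (C_inj C h).symm

lemma overD_left {n : ℕ} (D : OrientedChordDiagram n) (x u : Fin (2*n)) :
    OverD D (D.1.1 x) u ↔ OverD D x u := by
  unfold OverD; rw [crosses_left, chordRep_C]

lemma overD_right {n : ℕ} (D : OrientedChordDiagram n) (x u : Fin (2*n)) :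
    OverD D x (D.1.1 u) ↔ OverD D x u := by
  unfold OverD; rw [crosses_right, chordRep_C]

lemma rtg_left {n : ℕ} {D : OrientedChordDiagram n} {x u : Fin (2*n)}
    (h : Relation.ReflTransGen (fun a b => OverD D a b) x u) : ReachChord D (D.1.1 x) u := by
  rcases Relation.ReflTransGen.cases_head h with rfl | ⟨c, h1, h2⟩
  · right; left; rw [D.1.2.1]
  · right; right
    exact Relation.ReflTransGen.head ((overD_left D x c).mpr h1) h2

lemma reach_trans {n : ℕ} {D : OrientedChordDiagram n} {x u v : Fin (2*n)}
    (h : ReachChord D x u) (h' : ReachChord D u v) : ReachChord D x v := by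
  rcases h with rfl | rfl | h
  · exact h'
  · rcases h' with rfl | rfl | h'
    · right; left; rfl
    · left; rw [D.1.2.1]
    · have := rtg_left h'; rwa [D.1.2.1] at this
  · rcases h' with rfl | rfl | h'
    · right; right; exact h
    · rcases Relation.ReflTransGen.cases_tail h with rfl | ⟨c, h1, h2⟩
      · right; left; rfl
      · right; right
        exact h1.tail ((overD_right D c u).mpr h2)
    · right; right; exact h.trans h'

lemma reach_over {n : ℕ} {D : OrientedChordDiagram n} {x u : Fin (2*n)}
    (h : OverD D x u) : ReachChord D x u := Or.inr (Or.inr (Relation.ReflTransGen.single h))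

lemma mutual_symm {n : ℕ} {D : OrientedChordDiagram n} {x u : Fin (2*n)}
    (h : MutualReach D x u) : MutualReach D u x := ⟨h.2, h.1⟩

lemma mutual_trans {n : ℕ} {D : OrientedChordDiagram n} {x u v : Fin (2*n)}
    (h : MutualReach D x u) (h' : MutualReach D u v) : MutualReach D x v :=
  ⟨reach_trans h.1 h'.1, reach_trans h'.2 h.2⟩

lemma nontrivial_cross {n : ℕ} {D : OrientedChordDiagram n} {x : Fin (2*n)}
    (h : ∃ u, u ≠ x ∧ u ≠ D.1.1 x ∧ MutualReach D x u) :
    ∃ c, Crosses D.1 x c ∧ MutualReach D x c := by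
  obtain ⟨u, h1, h2, h3, h4⟩ := h
  rcases h3 with h | h | h
  · exact absurd h h1
  · exact absurd h h2
  · rcases Relation.ReflTransGen.cases_head h with rfl | ⟨c, h5, h6⟩
    · exact absurd rfl h1
    · exact ⟨c, h5.1, reach_over h5, reach_trans (Or.inr (Or.inr h6)) h4⟩

def LongC {n : ℕ} (K : ℕ) (C : ChordDiagram n) (x : Fin (2*n)) : Prop :=
  K + min (x:ℕ) (C.1 x : ℕ) ≤ max (x:ℕ) (C.1 x : ℕ) ∧
    max (x:ℕ) (C.1 x : ℕ) + K ≤ min (x:ℕ) (C.1 x : ℕ) + 2*n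

lemma block_mem {N s q t : ℕ} (hq : q < N) (hs : s < N) (h : (s ≤ q ∧ q < s + t) ∨ q + N < s + t) :
    ∃ a < t, q = (s + a) % N := by
  by_cases c : s ≤ q
  · refine ⟨q - s, by omega, ?_⟩
    rw [show s + (q - s) = q by omega, Nat.mod_eq_of_lt hq]
  · refine ⟨q + N - s, by omega, ?_⟩
    rw [show s + (q + N - s) = q + N by omega, Nat.add_mod_right, Nat.mod_eq_of_lt hq]

lemma chordsInBlock_mono {n : ℕ} (C : ChordDiagram n) (i : ℕ) {t t' : ℕ} (h : t ≤ t') :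
    chordsInBlock n C i t ≤ chordsInBlock n C i t' := by
  apply Finset.card_le_card
  intro x hx
  simp only [mem_filter, mem_univ, true_and] at hx ⊢
  obtain ⟨h1, ⟨a, ha, ha'⟩, ⟨b, hb, hb'⟩⟩ := hx
  exact ⟨h1, ⟨a, by omega, ha'⟩, ⟨b, by omega, hb'⟩⟩

lemma block_two_of {n : ℕ} {C : ChordDiagram n} {x u : Fin (2*n)} {s t : ℕ}
    (h1 : x < C.1 x) (h2 : u < C.1 u) (h3 : x ≠ u)
    (a1 : ∃ a < t, (x:ℕ) = (s + a) % (2*n)) (a2 : ∃ a < t, (C.1 x:ℕ) = (s + a) % (2*n))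
    (a3 : ∃ a < t, (u:ℕ) = (s + a) % (2*n)) (a4 : ∃ a < t, (C.1 u:ℕ) = (s + a) % (2*n)) :
    2 ≤ chordsInBlock n C s t := by
  show 1 < _
  unfold chordsInBlock
  rw [Finset.one_lt_card]
  refine ⟨x, ?_, u, ?_, h3⟩
  · simp only [mem_filter, mem_univ, true_and]; exact ⟨h1, a1, a2⟩
  · simp only [mem_filter, mem_univ, true_and]; exact ⟨h2, a3, a4⟩

lemma short_aux {n K : ℕ} {C : ChordDiagram n} {x u : Fin (2*n)}
    (hx : x < C.1 x) (hu : u < C.1 u) (h1 : x < u) (h2 : u < C.1 x) (h3 : C.1 x < C.1 u)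
    (l1 : ¬ LongC K C x) (l2 : ¬ LongC K C u) :
    ∃ s < 2*n, 2 ≤ chordsInBlock n C s (2*K+1) := by
  have key : ∃ s < 2*n, (((s ≤ (x:ℕ) ∧ (x:ℕ) < s + (2*K+1)) ∨ (x:ℕ) + 2*n < s + (2*K+1)) ∧
    ((s ≤ (C.1 x:ℕ) ∧ (C.1 x:ℕ) < s + (2*K+1)) ∨ (C.1 x:ℕ) + 2*n < s + (2*K+1)) ∧
    ((s ≤ (u:ℕ) ∧ (u:ℕ) < s + (2*K+1)) ∨ (u:ℕ) + 2*n < s + (2*K+1)) ∧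
    ((s ≤ (C.1 u:ℕ) ∧ (C.1 u:ℕ) < s + (2*K+1)) ∨ (C.1 u:ℕ) + 2*n < s + (2*K+1))) := by
    have b1 := (C.1 x).isLt
    have b2 := (C.1 u).isLt
    simp only [LongC, Fin.lt_def] at *
    rw [min_eq_left hx.le, max_eq_right hx.le] at l1
    rw [min_eq_left hu.le, max_eq_right hu.le] at l2
    by_cases c1 : (C.1 x : ℕ) < K + x
    · by_cases c2 : (C.1 u : ℕ) < K + u
      · exact ⟨x, by omega, by omega⟩
      · exact ⟨C.1 u, by omega, by omega⟩
    · by_cases c2 : (C.1 u : ℕ) < K + u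
      · exact ⟨u, by omega, by omega⟩
      · exact ⟨C.1 x, by omega, by omega⟩
  obtain ⟨s, hs, k1, k2, k3, k4⟩ := key
  exact ⟨s, hs, block_two_of hx hu h1.ne (block_mem (Fin.isLt _) hs k1) (block_mem (Fin.isLt _) hs k2)
    (block_mem (Fin.isLt _) hs k3) (block_mem (Fin.isLt _) hs k4)⟩

lemma long_C {n K : ℕ} (C : ChordDiagram n) (x : Fin (2*n)) : LongC K C (C.1 x) ↔ LongC K C x := by
  unfold LongC; rw [C.2.1, min_comm, max_comm]

lemma short_cross {n K : ℕ} {C : ChordDiagram n} {x u : Fin (2*n)} (h : Crosses C x u)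
    (l1 : ¬ LongC K C x) (l2 : ¬ LongC K C u) :
    ∃ s < 2*n, 2 ≤ chordsInBlock n C s (2*K+1) := by
  wlog hx : x < C.1 x generalizing x
  · exact this ((crosses_left C x u).mpr h) (by rwa [long_C])
      (by rw [C.2.1]; exact lt_of_le_of_ne (not_lt.mp hx) (C.2.2 x))
  wlog hu : u < C.1 u generalizing u
  · exact this (by rwa [long_C]) ((crosses_right C x u).mpr h)
      (by rw [C.2.1]; exact lt_of_le_of_ne (not_lt.mp hu) (C.2.2 u))
  have h' := h
  obtain ⟨n1, n2⟩ := crosses_ne h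
  have n3 : C.1 u ≠ x := fun h => n2 (by rw [← h, C.2.1])
  have n4 : C.1 u ≠ C.1 x := fun h => n1 (C_inj C h)
  rw [crosses_iff] at h
  have : (x < u ∧ u < C.1 x ∧ C.1 x < C.1 u) ∨ (u < x ∧ x < C.1 u ∧ C.1 u < C.1 x) := by
    simp only [Fin.lt_def, Fin.ext_iff, ne_eq] at *
    omega
  rcases this with ⟨a, b, c⟩ | ⟨a, b, c⟩
  · exact short_aux hx hu a b c l1 l2
  · exact short_aux hu hx a b c l2 l1

lemma geom {n k w a b p t : ℕ} (hab : a < b) (hpt : p < t) (n1 : a ≠ p) (n2 : a ≠ t) (n3 : b ≠ p)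
    (n4 : b ≠ t) (hb : b < 2*n) (hp : p < k) (ht : t < n) (ht' : n ≤ t + w) (hw : 10 * w ≤ n)
    (hk : 10 * k ≤ w) (l1 : 4*k + a ≤ b) (l2 : b + 4*k ≤ a + 2*n) :
    ∃ u v, u + k ≤ 2*n ∧ v + w ≤ 2*n ∧ (u + k ≤ v ∨ v + w ≤ u) ∧
      ∀ i j, u ≤ i → i < u + k → v ≤ j → j < v + w →
        (((a < i ∧ i < b) ∧ ¬ (a < j ∧ j < b)) ∨ ((a < j ∧ j < b) ∧ ¬ (a < i ∧ i < b))) ∧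
        (((p < i ∧ i < t) ∧ ¬ (p < j ∧ j < t)) ∨ ((p < j ∧ j < t) ∧ ¬ (p < i ∧ i < t))) := by
  by_cases c1 : a < p
  · by_cases c2 : b < t
    · refine ⟨p+1, t+1, by omega, by omega, by omega, ?_⟩; intros; omega
    · refine ⟨b+1, p+1, by omega, by omega, by omega, ?_⟩; intros; omega
  · by_cases c2 : b < t
    · refine ⟨a+1, t+1, by omega, by omega, by omega, ?_⟩; intros; omega
    · by_cases c3 : t < a
      · refine ⟨a+1, p+1, by omega, by omega, by omega, ?_⟩; intros; omega
      · by_cases c4 : w + a + 1 ≤ t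
        · by_cases c5 : b + 1 + k ≤ 2*n
          · refine ⟨b+1, a+1, by omega, by omega, by omega, ?_⟩; intros; omega
          · refine ⟨p+1, t+1, by omega, by omega, by omega, ?_⟩; intros; omega
        · by_cases c5 : t + 1 + k ≤ b
          · refine ⟨t+1, p+1, by omega, by omega, by omega, ?_⟩; intros; omega
          · refine ⟨a+1, b+1, by omega, by omega, by omega, ?_⟩; intros; omega

lemma exists_E {n m w : ℕ} {C : ChordDiagram n} (hB : ¬ Bad2 m w C) {x p : Fin (2*n)}
    (hw : 10 * w ≤ n) (hk : 10 * (2*m*m) ≤ w) (hp : (p:ℕ) < 2*m*m) (ht : (C.1 p : ℕ) < n)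
    (ht' : n ≤ (C.1 p : ℕ) + w) (hx : LongC (4*(2*m*m)) C x) (h1 : x ≠ p) (h2 : x ≠ C.1 p) :
    ∃ E : Finset (Fin (2*n)), E.card = m ∧ (∀ e ∈ E, Crosses C x e ∧ Crosses C p e) ∧
      ∀ e ∈ E, ∀ e' ∈ E, chordRep C e = chordRep C e' → e = e' := by
  have h3 : C.1 x ≠ p := fun h => h2 (by rw [← h, C.2.1])
  have h4 : C.1 x ≠ C.1 p := fun h => h1 (C_inj C h)
  have hxx := C.2.2 x
  obtain ⟨u, v, hu, hv, hd, H⟩ := geom (n := n) (k := 2*m*m) (w := w) (a := min (x:ℕ) (C.1 x))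
    (b := max (x:ℕ) (C.1 x)) (p := p) (t := C.1 p)
    (by simp only [ne_eq, Fin.ext_iff] at *; omega) (by omega)
    (by simp only [ne_eq, Fin.ext_iff] at *; omega) (by simp only [ne_eq, Fin.ext_iff] at *; omega)
    (by simp only [ne_eq, Fin.ext_iff] at *; omega) (by simp only [ne_eq, Fin.ext_iff] at *; omega)
    (by omega) hp ht ht' hw hk hx.1 hx.2
  have hsub : ∀ i : Fin m, ∃ e : Fin (2*n), u + 2*m*i ≤ (e:ℕ) ∧ (e:ℕ) < u + 2*m*i + 2*m ∧
      v ≤ (C.1 e : ℕ) ∧ (C.1 e : ℕ) < v + w := by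
    intro i
    by_contra hcon
    apply hB
    have hi : 2*m*i + 2*m ≤ 2*m*m := by
      have : (i:ℕ) + 1 ≤ m := i.isLt
      calc 2*m*i + 2*m = 2*m*(i+1) := by ring
        _ ≤ 2*m*m := by gcongr
    refine ⟨u + 2*m*i, v, by omega, hv, by omega, ?_⟩
    intro e he1 he2 he3
    exact hcon ⟨e, he1, he2, he3⟩
  choose e he1 he2 he3 he4 using hsub
  have hin : ∀ i, u ≤ (e i : ℕ) ∧ (e i : ℕ) < u + 2*m*m := by
    intro i
    have hi : 2*m*i + 2*m ≤ 2*m*m := by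
      have : (i:ℕ) + 1 ≤ m := i.isLt
      calc 2*m*i + 2*m = 2*m*(i+1) := by ring
        _ ≤ 2*m*m := by gcongr
    have := he1 i
    have := he2 i
    exact ⟨by omega, by omega⟩
  have hinj : Function.Injective e := by
    intro i j hij
    by_contra hne
    wlog hlt : i < j generalizing i j
    · exact this hij.symm (Ne.symm hne) (lt_of_le_of_ne (not_lt.mp hlt) (Ne.symm hne))
    have h5 : 2*m*i + 2*m ≤ 2*m*j := by
      have : (i:ℕ) + 1 ≤ j := hlt
      calc 2*m*i + 2*m = 2*m*(i+1) := by ring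
        _ ≤ 2*m*j := by gcongr
    have h6 := he2 i
    have h7 := he1 j
    rw [hij] at h6
    omega
  refine ⟨univ.image e, ?_, ?_, ?_⟩
  · rw [Finset.card_image_of_injective _ hinj]; simp
  · intro z hz
    simp only [mem_image, mem_univ, true_and] at hz
    obtain ⟨i, rfl⟩ := hz
    have := H (e i) (C.1 (e i)) (hin i).1 (hin i).2 (he3 i) (he4 i)
    have hpt : (p:ℕ) < C.1 p := by omega
    refine ⟨?_, ?_⟩
    · rw [crosses_iff]
      exact this.1
    · rw [crosses_iff]
      simp only [min_eq_left hpt.le, max_eq_right hpt.le]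
      exact this.2
  · intro z hz z' hz' heq
    simp only [mem_image, mem_univ, true_and] at hz hz'
    obtain ⟨i, rfl⟩ := hz
    obtain ⟨j, rfl⟩ := hz'
    rcases chordRep_eq heq with h | h
    · exact h.symm
    · exfalso
      have a1 := hin j
      have a2 := he3 i
      have a3 := he4 i
      rw [h] at a1
      omega

def posP {N : ℕ} (r r' : Fin N) : Fin N × Fin N := if r ≤ r' then (r, r') else (r', r)

lemma posP_eq {N : ℕ} {a b c d : Fin N} (h : posP a b = posP c d) :
    (a = c ∧ b = d) ∨ (a = d ∧ b = c) := by
  unfold posP at h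
  split_ifs at h <;> simp only [Prod.mk.injEq] at h <;> tauto

lemma overD_pos {n : ℕ} {C : ChordDiagram n} {ω : Fin (2*n) → Fin (2*n) → Bool} {x u : Fin (2*n)}
    (h : Crosses C x u)
    (hω : ω (posP (chordRep C x) (chordRep C u)).1 (posP (chordRep C x) (chordRep C u)).2 =
      decide (chordRep C x ≤ chordRep C u)) : OverD (C, ω) x u := by
  refine ⟨h, ?_⟩
  unfold posP at hω
  by_cases c : chordRep C x ≤ chordRep C u
  · left; simp only [c, if_true, decide_true] at hω; exact ⟨c, hω⟩
  · right; simp only [c, if_false, decide_false] at hω; exact ⟨not_le.mp c, hω⟩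

lemma coin_fail {n m : ℕ} {C : ChordDiagram n} {x p : Fin (2*n)} (h1 : p ≠ x) (h2 : p ≠ C.1 x)
    {E : Finset (Fin (2*n))} (hm : E.card = m) (hE : ∀ e ∈ E, Crosses C x e ∧ Crosses C p e)
    (hinj : ∀ e ∈ E, ∀ e' ∈ E, chordRep C e = chordRep C e' → e = e') :
    4^m * ((univ : Finset (Fin (2*n) → Fin (2*n) → Bool)).filter
      (fun ω => ¬ ∃ e, OverD (C, ω) x e ∧ OverD (C, ω) e p)).card ≤
    3^m * (univ : Finset (Fin (2*n) → Fin (2*n) → Bool)).card := by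
  have hxp : chordRep C x ≠ chordRep C p := fun h => by
    rcases chordRep_eq h with h | h
    · exact h1 h
    · exact h2 h
  have hxe : ∀ e ∈ E, chordRep C x ≠ chordRep C e := fun e he h => by
    obtain ⟨a, b⟩ := crosses_ne (hE e he).1
    rcases chordRep_eq h with h | h
    · exact a h
    · exact b h
  have hpe : ∀ e ∈ E, chordRep C p ≠ chordRep C e := fun e he h => by
    obtain ⟨a, b⟩ := crosses_ne (hE e he).2
    rcases chordRep_eq h with h | h
    · exact a h
    · exact b h
  have := coin_bound (fun e => posP (chordRep C x) (chordRep C e))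
    (fun e => posP (chordRep C e) (chordRep C p)) (fun e => decide (chordRep C x ≤ chordRep C e))
    (fun e => decide (chordRep C e ≤ chordRep C p)) E ?_ ?_ ?_
  · rw [hm] at this
    refine le_trans (Nat.mul_le_mul_left _ (Finset.card_le_card ?_)) this
    intro ω hω
    simp only [mem_filter, mem_univ, true_and] at hω ⊢
    rintro e he ⟨g1, g2⟩
    exact hω ⟨e, overD_pos (hE e he).1 g1, overD_pos (crosses_symm (hE e he).2) g2⟩
  · intro e he e' he' h
    rcases posP_eq h with h | h
    · exact hinj e he e' he' h.2
    · exact absurd h.1 (hxe e' he')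
  · intro e he e' he' h
    rcases posP_eq h with h | h
    · exact hinj e he e' he' h.1
    · exact absurd h.2 (hpe e' he')
  · intro e he e' he' h
    rcases posP_eq h with h | h
    · exact hxe e' he' h.1
    · exact hxp h.1

def Ev (n : ℕ) (D : OrientedChordDiagram n) : Prop :=
  (¬ ∃ i < 2*n, 2 ≤ chordsInBlock n D.1 i ⌊5 * Real.log n⌋₊) ∧
        (∀ x y : Fin (2*n),
          (∃ u, u ≠ x ∧ u ≠ D.1.1 x ∧ MutualReach D x u) →
          (∃ v, v ≠ y ∧ v ≠ D.1.1 y ∧ MutualReach D y v) →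
          MutualReach D x y)

lemma good_C {n m : ℕ} (hm : 1 ≤ m) (hk : 10 * (2*m*m) ≤ n/10)
    (hlog : ⌊5 * Real.log n⌋₊ ≤ 2*(4*(2*m*m))+1) (C : ChordDiagram n)
    (hb1 : ¬ ∃ s < 2*n, 2 ≤ chordsInBlock n C s (2*(4*(2*m*m))+1)) (hb2 : ¬ Bad2 m (n/10) C) :
    (((univ : Finset (Fin (2*n) → Fin (2*n) → Bool)).filter (fun ω => ¬ Ev n (C, ω))).card : ℝ)
      ≤ 4 * n * (3/4)^m * ((univ : Finset (Fin (2*n) → Fin (2*n) → Bool)).card : ℝ) := by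
  have hmm : m ≤ m * m := Nat.le_mul_of_pos_left m hm
  have hmm2 : 2*m*m = 2*(m*m) := by ring
  obtain ⟨p, hp, hp1, hp2⟩ : ∃ p : Fin (2*n), (p:ℕ) < 2*m*m ∧ (C.1 p : ℕ) < n ∧
      n ≤ (C.1 p : ℕ) + n/10 := by
    by_contra hcon
    apply hb2
    refine ⟨0, n - n/10, by omega, by omega, by omega, ?_⟩
    intro x _ hx hx2
    exact hcon ⟨x, by omega, by omega, by omega⟩
  set c := ((univ : Finset (Fin (2*n) → Fin (2*n) → Bool)).card : ℝ) with hc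
  let S := (univ : Finset (Fin (2*n))).filter
    (fun x => LongC (4*(2*m*m)) C x ∧ x ≠ p ∧ x ≠ C.1 p)
  let F1 : Fin (2*n) → Finset (Fin (2*n) → Fin (2*n) → Bool) := fun x =>
    univ.filter (fun ω => ¬ ∃ e, OverD (C, ω) x e ∧ OverD (C, ω) e p)
  let F2 : Fin (2*n) → Finset (Fin (2*n) → Fin (2*n) → Bool) := fun x =>
    univ.filter (fun ω => ¬ ∃ e, OverD (C, ω) p e ∧ OverD (C, ω) e x)
  have conv : ∀ F : Finset (Fin (2*n) → Fin (2*n) → Bool),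
      4^m * F.card ≤ 3^m * (univ : Finset (Fin (2*n) → Fin (2*n) → Bool)).card →
      (F.card : ℝ) ≤ (3/4)^m * c := by
    intro F h
    have h' : (4:ℝ)^m * F.card ≤ 3^m * c := by rw [hc]; exact_mod_cast h
    rw [div_pow, div_mul_eq_mul_div, le_div_iff₀ (by positivity)]
    linarith
  have hF : ∀ x ∈ S, ((F1 x ∪ F2 x).card : ℝ) ≤ 2 * ((3/4)^m * c) := by
    intro x hx
    simp only [S, mem_filter, mem_univ, true_and] at hx
    obtain ⟨hl, h1, h2⟩ := hx
    obtain ⟨E, hE, hE1, hE2⟩ := exists_E hb2 (by omega) hk hp hp1 hp2 hl h1 h2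
    have h3 : p ≠ C.1 x := fun h => h2 (by rw [h, C.2.1])
    have g1 := conv (F1 x) (coin_fail h1.symm h3 hE hE1 hE2)
    have g2 := conv (F2 x) (coin_fail h1 h2 hE (fun e he => ⟨(hE1 e he).2, (hE1 e he).1⟩) hE2)
    have g3 : ((F1 x ∪ F2 x).card : ℝ) ≤ (F1 x).card + (F2 x).card := by
      exact_mod_cast Finset.card_union_le _ _
    linarith
  have hsub : (univ : Finset (Fin (2*n) → Fin (2*n) → Bool)).filter (fun ω => ¬ Ev n (C, ω)) ⊆
      S.biUnion (fun x => F1 x ∪ F2 x) := by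
    intro ω hω
    by_contra hcon
    simp only [mem_filter, mem_univ, true_and] at hω
    apply hω
    have hlong : ∀ x, LongC (4*(2*m*m)) C x → MutualReach (C, ω) x p := by
      intro x hx
      by_cases h1 : x = p
      · subst h1; exact ⟨Or.inl rfl, Or.inl rfl⟩
      by_cases h2 : x = C.1 p
      · refine ⟨Or.inr (Or.inl ?_), Or.inr (Or.inl ?_)⟩
        · show p = C.1 x
          rw [h2, C.2.1]
        · exact h2
      have h3 : ω ∉ F1 x ∪ F2 x := by
        intro h
        apply hcon
        rw [Finset.mem_biUnion]
        exact ⟨x, by simp only [S, mem_filter, mem_univ, true_and]; exact ⟨hx, h1, h2⟩, h⟩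
      simp only [F1, F2, mem_union, mem_filter, mem_univ, true_and, not_or, not_not] at h3
      obtain ⟨⟨e, a1, a2⟩, ⟨e', a3, a4⟩⟩ := h3
      exact ⟨reach_trans (reach_over a1) (reach_over a2), reach_trans (reach_over a3) (reach_over a4)⟩
    have hall : ∀ x, (∃ u, u ≠ x ∧ u ≠ C.1 x ∧ MutualReach (C, ω) x u) → MutualReach (C, ω) x p := by
      intro x hx
      obtain ⟨d, hd1, hd2⟩ := nontrivial_cross (D := (C, ω)) hx
      by_cases l1 : LongC (4*(2*m*m)) C x
      · exact hlong x l1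
      by_cases l2 : LongC (4*(2*m*m)) C d
      · exact mutual_trans hd2 (hlong d l2)
      exact absurd (short_cross hd1 l1 l2) hb1
    refine ⟨?_, ?_⟩
    · rintro ⟨i, hi, h⟩
      exact hb1 ⟨i, hi, h.trans (chordsInBlock_mono _ _ hlog)⟩
    · intro x y hx hy
      exact mutual_trans (hall x hx) (mutual_symm (hall y hy))
  have hS : (S.card : ℝ) ≤ 2 * n := by
    have : S.card ≤ 2*n := by simpa using Finset.card_le_univ S
    exact_mod_cast this
  have hc0 : 0 ≤ c := by positivity
  calc _ ≤ ((S.biUnion (fun x => F1 x ∪ F2 x)).card : ℝ) := by exact_mod_cast Finset.card_le_card hsub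
    _ ≤ ∑ x ∈ S, ((F1 x ∪ F2 x).card : ℝ) := by exact_mod_cast Finset.card_biUnion_le
    _ ≤ ∑ x ∈ S, (2 * ((3/4)^m * c)) := Finset.sum_le_sum hF
    _ = S.card * (2 * ((3/4)^m * c)) := by rw [Finset.sum_const, nsmul_eq_mul]
    _ ≤ (2*n) * (2 * ((3/4)^m * c)) := by gcongr
    _ = _ := by ring

lemma main_bound {n m : ℕ} (hm : 1 ≤ m) (hk : 10 * (2*m*m) ≤ n/10)
    (hlog : ⌊5 * Real.log n⌋₊ ≤ 2*(4*(2*m*m))+1) :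
    1 - probD n (Ev n) ≤
      2*n * (2*(4*(2*m*m))+1 : ℝ)^4 / ((2*n-1)*(2*n-3)) +
      (2*n+1)^2 * (1 - ((n/10 : ℕ):ℝ)/(2*n))^m + 4*n*(3/4)^m := by
  have hn : 200 ≤ n := by
    have : 1 ≤ m * m := Nat.mul_pos hm hm
    have hmm2 : 2*m*m = 2*(m*m) := by ring
    omega
  have hnR : (200:ℝ) ≤ n := by exact_mod_cast hn
  set c := ((univ : Finset (Fin (2*n) → Fin (2*n) → Bool)).card : ℝ) with hc
  have hcpos : 0 < c := by
    rw [hc]; exact_mod_cast Finset.card_pos.mpr ⟨fun _ _ => true, mem_univ _⟩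
  have hFpos : (0:ℝ) < FF (2*n) := by exact_mod_cast FF_even_pos n
  set B1 := ((univ : Finset (ChordDiagram n)).filter
    (fun C => ∃ s < 2*n, 2 ≤ chordsInBlock n C s (2*(4*(2*m*m))+1))) with hB1
  set B2 := ((univ : Finset (ChordDiagram n)).filter (fun C => Bad2 m (n/10) C)) with hB2
  have htot : ((univ : Finset (OrientedChordDiagram n)).card : ℝ) = FF (2*n) * c := by
    rw [hc, ← CD_total]
    rw [← Nat.cast_mul]
    congr 1
    exact Finset.card_product _ _
  have hprob : 1 - probD n (Ev n) =
      (((univ : Finset (OrientedChordDiagram n)).filter (fun D => ¬ Ev n D)).card : ℝ) / (FF (2*n) * c) := by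
    unfold probD
    rw [htot]
    have h := Finset.card_filter_add_card_filter_not (s := (univ : Finset (OrientedChordDiagram n))) (Ev n)
    have h' : (((univ : Finset (OrientedChordDiagram n)).filter (fun D => Ev n D)).card : ℝ) +
      (((univ : Finset (OrientedChordDiagram n)).filter (fun D => ¬ Ev n D)).card : ℝ) = FF (2*n) * c := by
      rw [← htot]; exact_mod_cast h
    have hne : (FF (2*n) : ℝ) * c ≠ 0 := by positivity
    rw [eq_div_iff hne, sub_mul, div_mul_cancel₀ _ hne]
    linarith
  have hsum : (((univ : Finset (OrientedChordDiagram n)).filter (fun D => ¬ Ev n D)).card : ℝ)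
      = ∑ C : ChordDiagram n,
        (((univ : Finset (Fin (2*n) → Fin (2*n) → Bool)).filter (fun ω => ¬ Ev n (C, ω))).card : ℝ) := by
    rw [Finset.card_filter]
    rw [Fintype.sum_prod_type]
    push_cast
    apply Finset.sum_congr rfl
    intro C _
    rw [Finset.card_filter]
    push_cast
    rfl
  have hle : ∀ C : ChordDiagram n,
      (((univ : Finset (Fin (2*n) → Fin (2*n) → Bool)).filter (fun ω => ¬ Ev n (C, ω))).card : ℝ)
      ≤ (if C ∈ B1 then c else 0) + (if C ∈ B2 then c else 0) + 4 * n * (3/4)^m * c := by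
    intro C
    have h0 : (((univ : Finset (Fin (2*n) → Fin (2*n) → Bool)).filter (fun ω => ¬ Ev n (C, ω))).card : ℝ)
      ≤ c := by rw [hc]; exact_mod_cast Finset.card_filter_le _ _
    have h1 : 0 ≤ 4 * n * (3/4)^m * c := by positivity
    by_cases c1 : C ∈ B1
    · rw [if_pos c1]
      split_ifs <;> linarith
    · by_cases c2 : C ∈ B2
      · rw [if_pos c2, if_neg c1]; linarith
      · rw [if_neg c1, if_neg c2, zero_add, zero_add]
        refine good_C hm hk hlog C ?_ ?_
        · simpa [hB1] using c1
        · simpa [hB2] using c2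
  have hb1 : (B1.card : ℝ) ≤ 2*n * (2*(4*(2*m*m))+1 : ℝ)^4 * FF (2*n-4) := by
    have := bad1_card n (2*(4*(2*m*m))+1)
    exact_mod_cast this
  have hb2 : (B2.card : ℝ) ≤ (2*n+1)^2 * (FF (2*n) * (1 - ((n/10 : ℕ):ℝ)/(2*n))^m) :=
    bad2_card n m (n/10) (by omega)
  have hFF : (FF (2*n) : ℝ) = (2*n-1)*(2*n-3) * FF (2*n-4) := by
    obtain ⟨r, hr⟩ : ∃ r, n = r + 2 := ⟨n - 2, by omega⟩
    subst hr
    rw [show 2*(r+2) = 2*r+4 by ring, show 2*r+4-4 = 2*r by omega]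
    simp only [FF]
    push_cast
    ring
  rw [hprob, hsum, div_le_iff₀ (by positivity)]
  refine (Finset.sum_le_sum (fun C _ => hle C)).trans ?_
  rw [Finset.sum_add_distrib, Finset.sum_add_distrib, Finset.sum_ite_mem, Finset.sum_ite_mem,
    Finset.univ_inter, Finset.univ_inter, Finset.sum_const, Finset.sum_const, Finset.sum_const,
    CD_total, nsmul_eq_mul, nsmul_eq_mul, nsmul_eq_mul]
  have e1 : 2*n * (2*(4*(2*m*m))+1 : ℝ)^4 / ((2*n-1)*(2*n-3)) * (FF (2*n) * c)
      = (2*n * (2*(4*(2*m*m))+1 : ℝ)^4 * FF (2*n-4)) * c := by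
    have p1 : (2*n-1 : ℝ) ≠ 0 := by linarith
    have p2 : (2*n-3 : ℝ) ≠ 0 := by linarith
    rw [hFF]
    field_simp
  have e2 := mul_le_mul_of_nonneg_right hb1 hcpos.le
  have e3 := mul_le_mul_of_nonneg_right hb2 hcpos.le
  rw [add_mul, add_mul, e1]
  linarith

def mS (n : ℕ) : ℕ := Nat.sqrt (Nat.sqrt (Nat.sqrt (Nat.sqrt n)))

lemma mS_le (n : ℕ) : mS n ^ 16 ≤ n := by
  unfold mS
  have h1 := Nat.sqrt_le' n
  have h2 := Nat.sqrt_le' (Nat.sqrt n)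
  have h3 := Nat.sqrt_le' (Nat.sqrt (Nat.sqrt n))
  have h4 := Nat.sqrt_le' (Nat.sqrt (Nat.sqrt (Nat.sqrt n)))
  generalize Nat.sqrt n = a at *
  generalize Nat.sqrt a = b at *
  generalize Nat.sqrt b = c at *
  generalize Nat.sqrt c = d at *
  calc d^16 = (((d^2)^2)^2)^2 := by ring
    _ ≤ ((c^2)^2)^2 := by gcongr
    _ ≤ (b^2)^2 := by gcongr
    _ ≤ a^2 := by gcongr
    _ ≤ n := h1

lemma lt_mS (n : ℕ) : n < (mS n + 1) ^ 16 := by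
  unfold mS
  have h1 := Nat.lt_succ_sqrt' n
  have h2 := Nat.lt_succ_sqrt' (Nat.sqrt n)
  have h3 := Nat.lt_succ_sqrt' (Nat.sqrt (Nat.sqrt n))
  have h4 := Nat.lt_succ_sqrt' (Nat.sqrt (Nat.sqrt (Nat.sqrt n)))
  generalize Nat.sqrt n = a at *
  generalize Nat.sqrt a = b at *
  generalize Nat.sqrt b = c at *
  generalize Nat.sqrt c = d at *
  simp only [Nat.succ_eq_add_one] at *
  calc n < (a+1)^2 := h1
    _ ≤ ((b+1)^2)^2 := by gcongr; exact h2
    _ ≤ (((c+1)^2)^2)^2 := by gcongr; exact h3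
    _ ≤ ((((d+1)^2)^2)^2)^2 := by gcongr; exact h4
    _ = _ := by ring

lemma mS_tendsto : Tendsto mS atTop atTop := by
  rw [tendsto_atTop]
  intro b
  filter_upwards [eventually_ge_atTop ((b+1)^16)] with n hn
  by_contra h
  have h1 : (mS n + 1)^16 ≤ (b+1)^16 := by gcongr; omega
  have := lt_mS n
  omega

lemma final_bound {n : ℕ} (hm : 20 ≤ mS n) :
    1 - probD n (Ev n) ≤ 167042 / (mS n : ℝ) +
      16 * 2^32 * ((mS n : ℝ)^32 * (39/40)^(mS n)) + 4 * 2^16 * ((mS n : ℝ)^16 * (3/4)^(mS n)) := by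
  have h1 := mS_le n
  have h2 := lt_mS n
  generalize mS n = m at *
  have h3 : n ≤ (2*m)^16 := h2.le.trans (by gcongr; omega)
  have hmR : (20:ℝ) ≤ m := by exact_mod_cast hm
  have h1R : (m:ℝ)^16 ≤ n := by exact_mod_cast h1
  have h3R : (n:ℝ) ≤ 2^16 * m^16 := by
    have : (n:ℝ) ≤ (2*m)^16 := by exact_mod_cast h3
    rwa [mul_pow] at this
  clear h2
  have h200 : 200 * (m*m) ≤ n := by
    calc 200 * (m*m) ≤ m^14 * (m*m) := by
          gcongr
          calc 200 ≤ 20^14 := by norm_num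
            _ ≤ m^14 := Nat.pow_le_pow_left hm 14
      _ = m^16 := by ring
      _ ≤ n := h1
  have hn : 200 ≤ n := le_trans (by nlinarith) h200
  have hnR : (200:ℝ) ≤ n := by exact_mod_cast hn
  have hmm2 : 2*m*m = 2*(m*m) := by ring
  have hk : 10 * (2*m*m) ≤ n/10 := by omega
  have hlog : ⌊5 * Real.log n⌋₊ ≤ 2*(4*(2*m*m))+1 := by
    have a1 : Real.log n ≤ 16 * (2 * m) := by
      calc Real.log n ≤ Real.log ((2*m)^16) := by
            apply Real.log_le_log (by linarith)
            rw [mul_pow]; exact h3R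
        _ = 16 * Real.log (2*m) := by rw [Real.log_pow]; norm_num
        _ ≤ 16 * (2*m) := by
            gcongr
            exact (Real.log_le_sub_one_of_pos (by linarith)).trans (by linarith)
    have a2 : 5 * Real.log n ≤ ((2*(4*(2*m*m))+1 : ℕ) : ℝ) := by
      push_cast
      have a3 : 20 * (m:ℝ) ≤ m * m := by gcongr
      linarith
    exact Nat.floor_le_of_le a2
  refine (main_bound (by omega) hk hlog).trans ?_
  have t1 : 2*n * (2*(4*(2*m*m))+1 : ℝ)^4 / ((2*n-1)*(2*n-3)) ≤ 167042 / (m:ℝ) := by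
    have b1 : (2*(4*(2*m*m))+1 : ℝ) ≤ 17 * m^2 := by nlinarith
    have b2 : (n:ℝ)^2 ≤ (2*n-1)*(2*n-3) := by nlinarith
    have hn0 : (0:ℝ) < n := by linarith
    have hm0 : (0:ℝ) < m := by linarith
    calc 2*(n:ℝ) * (2*(4*(2*m*m))+1 : ℝ)^4 / ((2*n-1)*(2*n-3))
        ≤ 2*(n:ℝ) * (17 * m^2 : ℝ)^4 / (n:ℝ)^2 := by gcongr
      _ = 167042 * (m:ℝ)^8 / (n:ℝ) := by field_simp; ring
      _ ≤ 167042 * (m:ℝ)^8 / (m:ℝ)^16 := by gcongr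
      _ = 167042 / (m:ℝ)^8 := by field_simp
      _ ≤ 167042 / (m:ℝ) := by
        gcongr
        exact le_self_pow₀ (by linarith) (by norm_num)
  have t2 : ((2:ℝ)*n+1)^2 * (1 - ((n/10 : ℕ):ℝ)/(2*n))^m ≤ 16 * 2^32 * ((m : ℝ)^32 * (39/40)^m) := by
    have c1 : (n:ℝ) ≤ 20 * ((n/10 : ℕ):ℝ) := by
      have : n ≤ 20 * (n/10) := by omega
      exact_mod_cast this
    have c2 : (1 - ((n/10 : ℕ):ℝ)/(2*n)) ≤ 39/40 := by
      have : (1/40 : ℝ) ≤ ((n/10 : ℕ):ℝ)/(2*n) := by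
        rw [le_div_iff₀ (by linarith)]; linarith
      linarith
    have c3 : 0 ≤ (1 - ((n/10 : ℕ):ℝ)/(2*n)) := by
      rw [sub_nonneg]
      apply div_le_one_of_le₀
      · have : n/10 ≤ 2*n := by omega
        exact_mod_cast this
      · positivity
    calc ((2:ℝ)*n+1)^2 * (1 - ((n/10 : ℕ):ℝ)/(2*n))^m ≤ (4*(2^16*m^16))^2 * (39/40)^m := by
          gcongr
          linarith
      _ = _ := by ring
  have t3 : 4*(n:ℝ)*(3/4)^m ≤ 4 * 2^16 * ((m : ℝ)^16 * (3/4)^m) := by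
    calc 4*(n:ℝ)*(3/4)^m ≤ 4*(2^16*m^16)*(3/4)^m := by gcongr
      _ = _ := by ring
  linarith

lemma Ev_tendsto : Tendsto (fun n => probD n (Ev n)) atTop (nhds 1) := by
  have hg : Tendsto (fun m : ℕ => 167042 / (m : ℝ) +
      16 * 2^32 * ((m : ℝ)^32 * (39/40)^m) + 4 * 2^16 * ((m : ℝ)^16 * (3/4)^m)) atTop (nhds 0) := by
    have a1 := tendsto_const_div_atTop_nhds_zero_nat (167042:ℝ)
    have a2 := (tendsto_pow_const_mul_const_pow_of_abs_lt_one 32 (r := (39/40:ℝ))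
      (by rw [abs_of_pos] <;> norm_num)).const_mul (16 * 2^32 : ℝ)
    have a3 := (tendsto_pow_const_mul_const_pow_of_abs_lt_one 16 (r := (3/4:ℝ))
      (by rw [abs_of_pos] <;> norm_num)).const_mul (4 * 2^16 : ℝ)
    simpa using (a1.add a2).add a3
  have hg2 := hg.comp mS_tendsto
  have hlow := (tendsto_const_nhds (x := (1:ℝ)) (f := atTop (α := ℕ))).sub hg2
  rw [sub_zero] at hlow
  refine tendsto_of_tendsto_of_tendsto_of_le_of_le' hlow tendsto_const_nhds ?_ ?_
  · filter_upwards [mS_tendsto.eventually_ge_atTop 20] with n hn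
    have := final_bound hn
    simp only [Function.comp]
    linarith
  · refine Eventually.of_forall (fun n => ?_)
    unfold probD
    apply div_le_one_of_le₀
    · exact_mod_cast Finset.card_filter_le _ _
    · positivity

theorem stmt14 :
    Filter.Tendsto
      (fun n : ℕ => probD n (fun D =>
        (¬ ∃ i < 2*n, 2 ≤ chordsInBlock n D.1 i ⌊5 * Real.log n⌋₊) ∧
        (∀ x y : Fin (2*n),
          (∃ u, u ≠ x ∧ u ≠ D.1.1 x ∧ MutualReach D x u) →
          (∃ v, v ≠ y ∧ v ≠ D.1.1 y ∧ MutualReach D y v) →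
          MutualReach D x y)))
      Filter.atTop (nhds 1) := by
  exact Ev_tendsto
end

section
/- There is a constant A > 0 such that for all n and all positive integers k ≤ 2 log n, the expected number of chords of length k in the random oriented chord diagram D_n that either over-cross every chord they cross or under-cross every chord they cross differs from 2^{1−k} by at most A·k²/n. Equivalently, with ζ_k(i) the indicator that ⟨i, i+k+1⟩ (indices modulo 2n) is a chord of D_n that over-crosses all its neighbors or under-crosses all its neighbors, ∑_{i=1}^{2n} E[ζ_k(i)] = 2^{1−k} + O(k²/n) uniformly in k ≤ 2 log n. -/
open scoped Classical
open Finset Filter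

namespace S15

/-- Conjugation of a chord diagram by a permutation. -/
def conj {n : ℕ} (σ : Equiv.Perm (Fin (2*n))) (C : ChordDiagram n) : ChordDiagram n :=
  ⟨fun x => σ (C.1 (σ.symm x)), by
    refine ⟨fun x => ?_, fun x h => ?_⟩
    · simp [C.2.1]
    · apply C.2.2 (σ.symm x)
      rw [Equiv.eq_symm_apply]; exact h⟩

lemma conj_apply {n : ℕ} (σ : Equiv.Perm (Fin (2*n))) (C : ChordDiagram n) (x) :
    (conj σ C).1 x = σ (C.1 (σ.symm x)) := rfl

lemma conj_inj {n : ℕ} (σ : Equiv.Perm (Fin (2*n))) : Function.Injective (conj (n := n) σ) := by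
  intro C D h
  apply Subtype.ext
  funext x
  have := congrArg (fun E : ChordDiagram n => E.1 (σ x)) h
  simpa [conj_apply] using this

lemma inv_inj {n : ℕ} (C : ChordDiagram n) {x y} (h : C.1 x = C.1 y) : x = y := by
  rw [← C.2.1 x, h, C.2.1]

lemma card_pos (n : ℕ) : 0 < (univ : Finset (ChordDiagram n)).card := by
  rw [Finset.card_pos]
  refine ⟨⟨Fin.rev, fun i => Fin.rev_rev i, fun i h => ?_⟩, mem_univ _⟩
  have := congrArg Fin.val h
  rw [Fin.val_rev] at this
  omega

lemma card1_le {n : ℕ} (i a b : Fin (2*n)) (ha : a ≠ i) (hb : b ≠ i) :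
    (univ.filter fun C : ChordDiagram n => C.1 i = a).card ≤
    (univ.filter fun C : ChordDiagram n => C.1 i = b).card := by
  apply Finset.card_le_card_of_injOn (conj (Equiv.swap a b))
  · intro C hC
    simp only [coe_filter, mem_univ, true_and, Set.mem_setOf_eq] at hC ⊢
    rw [conj_apply, Equiv.symm_swap, Equiv.swap_apply_of_ne_of_ne ha.symm hb.symm, hC,
      Equiv.swap_apply_left]
  · exact (conj_inj _).injOn

lemma card1 {n : ℕ} (i j : Fin (2*n)) (h : j ≠ i) :
    (univ : Finset (ChordDiagram n)).card =
      (2*n - 1) * (univ.filter fun C : ChordDiagram n => C.1 i = j).card := by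
  rw [Finset.card_eq_sum_card_fiberwise (f := fun C : ChordDiagram n => C.1 i)
    (t := univ.erase i)]
  · rw [Finset.sum_congr rfl (g := fun _ => (univ.filter fun C : ChordDiagram n => C.1 i = j).card)]
    · simp [Finset.card_erase_of_mem]
    · intro x hx
      have hx := (Finset.mem_erase.1 hx).1
      exact le_antisymm (card1_le i x j hx h) (card1_le i j x h hx)
  · intro C _
    simp [C.2.2 i]

lemma card2_le {n : ℕ} (i j c a b : Fin (2*n))
    (hai : a ≠ i) (haj : a ≠ j) (hac : a ≠ c) (hbi : b ≠ i) (hbj : b ≠ j) (hbc : b ≠ c) :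
    (univ.filter fun C : ChordDiagram n => C.1 i = j ∧ C.1 c = a).card ≤
    (univ.filter fun C : ChordDiagram n => C.1 i = j ∧ C.1 c = b).card := by
  apply Finset.card_le_card_of_injOn (conj (Equiv.swap a b))
  · intro C hC
    simp only [coe_filter, mem_univ, true_and, Set.mem_setOf_eq] at hC ⊢
    rw [conj_apply, conj_apply, Equiv.symm_swap, Equiv.swap_apply_of_ne_of_ne hai.symm hbi.symm,
      hC.1, Equiv.swap_apply_of_ne_of_ne hac.symm hbc.symm, hC.2,
      Equiv.swap_apply_left, Equiv.swap_apply_of_ne_of_ne haj.symm hbj.symm]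
    exact ⟨rfl, rfl⟩
  · exact (conj_inj _).injOn

lemma card2 {n : ℕ} (i j c b : Fin (2*n)) (hij : j ≠ i) (hci : c ≠ i) (hcj : c ≠ j)
    (hbi : b ≠ i) (hbj : b ≠ j) (hbc : b ≠ c) :
    (univ.filter fun C : ChordDiagram n => C.1 i = j).card =
      (2*n - 3) * (univ.filter fun C : ChordDiagram n => C.1 i = j ∧ C.1 c = b).card := by
  rw [Finset.card_eq_sum_card_fiberwise (f := fun C : ChordDiagram n => C.1 c)
    (t := ((univ.erase i).erase j).erase c)]
  · rw [Finset.sum_congr rfl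
      (g := fun _ => (univ.filter fun C : ChordDiagram n => C.1 i = j ∧ C.1 c = b).card)]
    · rw [Finset.sum_const, Finset.card_erase_of_mem (by simp [hci, hcj]),
        Finset.card_erase_of_mem (by simp [hij]), Finset.card_erase_of_mem (by simp)]
      simp only [card_univ, Fintype.card_fin, smul_eq_mul]
      congr 1
    · intro x hx
      simp only [Finset.mem_erase, mem_univ, and_true] at hx
      rw [Finset.filter_filter]
      exact le_antisymm (card2_le i j c x b hx.2.2 hx.2.1 hx.1 hbi hbj hbc)
        (card2_le i j c b x hbi hbj hbc hx.2.2 hx.2.1 hx.1)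
  · intro C hC
    simp only [coe_filter, mem_univ, true_and, Set.mem_setOf_eq] at hC
    simp only [coe_erase, coe_univ, Set.mem_diff, Set.mem_univ, true_and, Set.mem_singleton_iff]
    refine ⟨⟨?_, ?_⟩, C.2.2 c⟩
    · intro h; apply hcj; rw [← C.2.1 c, h, hC]
    · intro h; apply hci; apply inv_inj C; rw [h, hC]

lemma card_bits {α : Type*} [Fintype α] (P : Finset α) (g : α → Bool) :
    (univ.filter fun s : α → Bool => ∀ p ∈ P, s p = g p).card * 2 ^ P.card
      = 2 ^ Fintype.card α := by
  have : (univ.filter fun s : α → Bool => ∀ p ∈ P, s p = g p) =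
      Fintype.piFinset (fun a => if a ∈ P then {g a} else univ) := by
    ext s
    simp only [mem_filter, mem_univ, true_and, Fintype.mem_piFinset]
    refine forall_congr' fun a => ?_
    by_cases h : a ∈ P <;> simp [h]
  rw [this, Fintype.card_piFinset]
  have h2 : (2:ℕ) ^ P.card = ∏ a : α, if a ∈ P then 2 else 1 := by
    rw [Finset.prod_ite_mem]; simp
  rw [h2, ← Finset.prod_mul_distrib, ← Finset.card_univ, ← Finset.prod_const]
  refine Finset.prod_congr rfl fun a _ => ?_
  by_cases h : a ∈ P <;> simp [h]

lemma card_bits2 {α : Type*} [Fintype α] (P : Finset (α × α)) (g : α × α → Bool) :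
    (univ.filter fun s : α → α → Bool => ∀ p ∈ P, s p.1 p.2 = g p).card * 2 ^ P.card
      = Fintype.card (α → α → Bool) := by
  have h1 := card_bits P g
  have h2 : Fintype.card (α → α → Bool) = 2 ^ Fintype.card (α × α) := by
    rw [← Fintype.card_congr (Equiv.curry α α Bool)]; simp
  rw [h2, ← h1]
  congr 1
  refine Finset.card_equiv (Equiv.curry α α Bool).symm ?_
  intro s
  simp [Function.uncurry]

/-- The arc cut off by the chord from `i` to `j`, going up from `i`. -/
noncomputable def arc {m : ℕ} (i j : Fin m) : Finset (Fin m) :=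
  if i < j then Ioo i j else univ \ Icc j i

lemma mem_arc {m : ℕ} (i j x : Fin m) :
    x ∈ arc i j ↔ (i < j ∧ i < x ∧ x < j) ∨ (¬ i < j ∧ (x < j ∨ i < x)) := by
  unfold arc
  split_ifs with h
  · simp [h]
  · simp only [Finset.mem_sdiff, Finset.mem_univ, true_and, mem_Icc, h, false_and, false_or, not_false_eq_true]
    rw [not_and_or, not_le, not_le]

lemma card_arc {n k : ℕ} (i j : Fin (2*n)) (hk : k + 1 < 2*n)
    (h : (j:ℕ) = ((i:ℕ) + k + 1) % (2*n)) : (arc i j).card = k := by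
  have hi := i.2
  have hj : (j:ℕ) = if (i:ℕ) + k + 1 < 2*n then (i:ℕ)+k+1 else (i:ℕ)+k+1-2*n := by
    rw [h]; split_ifs with h'
    · exact Nat.mod_eq_of_lt h'
    · rw [Nat.mod_eq_sub_mod (by omega), Nat.mod_eq_of_lt (by omega)]
  unfold arc
  split_ifs with hlt
  · rw [Fin.card_Ioo]; rw [Fin.lt_def] at hlt; split_ifs at hj <;> omega
  · rw [Finset.card_sdiff_of_subset (subset_univ _), Fin.card_Icc]
    rw [Fin.lt_def] at hlt; simp; split_ifs at hj <;> omega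

lemma crosses_iff {n : ℕ} (C : ChordDiagram n) (i u : Fin (2*n)) :
    Crosses C i u ↔ Xor' (u ∈ arc i (C.1 i)) (C.1 u ∈ arc i (C.1 i)) := by
  have h1 := C.2.1
  have h2 := C.2.2
  have e1 : u = i → C.1 u = C.1 i := fun h => by rw [h]
  have e2 : u = C.1 i → C.1 u = i := fun h => by rw [h, h1]
  have e3 : C.1 u = i → u = C.1 i := fun h => by rw [← h, h1]
  have e4 : C.1 u = C.1 i → u = i := inv_inj C
  have e5 := h2 i
  unfold Crosses Between
  simp only [mem_arc]
  generalize C.1 i = j at *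
  generalize C.1 u = v at *
  simp only [min_lt_iff, lt_max_iff, Fin.lt_def, Fin.ext_iff, Xor', Xor] at *
  simp only [ne_eq] at *
  omega

lemma crosses_symm {n : ℕ} (C : ChordDiagram n) (i u : Fin (2*n)) (h : Crosses C i u) :
    Crosses C u i := by
  have h1 := C.2.1
  have e1 : u = i → C.1 u = C.1 i := fun h => by rw [h]
  have e2 : u = C.1 i → C.1 u = i := fun h => by rw [h, h1]
  have e3 : C.1 u = i → u = C.1 i := fun h => by rw [← h, h1]
  have e4 : C.1 u = C.1 i → u = i := inv_inj C
  have e5 := C.2.2 i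
  have e6 := C.2.2 u
  unfold Crosses Between at *
  generalize C.1 i = j at *
  generalize C.1 u = v at *
  simp only [min_lt_iff, lt_max_iff, Fin.lt_def, Fin.ext_iff, Xor', Xor] at *
  simp only [ne_eq] at *
  omega

lemma rep_inv {n : ℕ} (C : ChordDiagram n) (u : Fin (2*n)) :
    chordRep C (C.1 u) = chordRep C u := by
  unfold chordRep; rw [C.2.1, min_comm]

lemma rep_eq {n : ℕ} (C : ChordDiagram n) (u v : Fin (2*n)) (h : chordRep C u = chordRep C v) :
    u = v ∨ u = C.1 v := by
  unfold chordRep at h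
  rcases min_choice u (C.1 u) with h1 | h1 <;> rcases min_choice v (C.1 v) with h2 | h2 <;>
    rw [h1, h2] at h
  · exact Or.inl h
  · exact Or.inr h
  · right; rw [← h, C.2.1]
  · exact Or.inl (inv_inj C h)

/-- The pair indexing the bit of the crossing of two chords with representatives `r`, `s`. -/
def pr {m : ℕ} (r s : Fin m) : Fin m × Fin m := (min r s, max r s)

lemma rep_ne {n : ℕ} (C : ChordDiagram n) (i u : Fin (2*n)) (h : Crosses C i u) :
    chordRep C i ≠ chordRep C u := by
  intro h'
  have hx := (crosses_iff C i u).1 h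
  have n1 : i ∉ arc i (C.1 i) := by simp [mem_arc]
  have n2 : C.1 i ∉ arc i (C.1 i) := by simp [mem_arc]
  rcases rep_eq C _ _ h'.symm with e | e
  · subst e; simp [Xor', n1, n2] at hx
  · subst e; simp [Xor', n1, n2, C.2.1] at hx

lemma over_iff {n : ℕ} (D : OrientedChordDiagram n) (i u : Fin (2*n)) (h : Crosses D.1 i u) :
    OverD D i u ↔ D.2 (pr (chordRep D.1 i) (chordRep D.1 u)).1
      (pr (chordRep D.1 i) (chordRep D.1 u)).2 =
        decide ((pr (chordRep D.1 i) (chordRep D.1 u)).1 = chordRep D.1 i) := by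
  have hne := rep_ne D.1 i u h
  unfold OverD pr
  generalize chordRep D.1 i = r at *
  generalize chordRep D.1 u = s at *
  rcases lt_or_gt_of_ne hne with hl | hl
  · simp [h, hl.le, hl.not_gt]
  · simp [h, hl.le, hl.not_ge, hl, hne.symm]

lemma under_iff {n : ℕ} (D : OrientedChordDiagram n) (i u : Fin (2*n)) (h : Crosses D.1 i u) :
    OverD D u i ↔ D.2 (pr (chordRep D.1 i) (chordRep D.1 u)).1
      (pr (chordRep D.1 i) (chordRep D.1 u)).2 =
        !decide ((pr (chordRep D.1 i) (chordRep D.1 u)).1 = chordRep D.1 i) := by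
  have hne := rep_ne D.1 i u h
  have h' := crosses_symm D.1 i u h
  unfold OverD pr
  generalize chordRep D.1 i = r at *
  generalize chordRep D.1 u = s at *
  rcases lt_or_gt_of_ne hne with hl | hl
  · simp [h', hl.le, hl.not_ge, hl]
  · simp [h', hl.le, hl.not_gt, hne.symm]

/-- The event that the chord of `i` over-crosses or under-crosses all its neighbors. -/
def Mono {n : ℕ} (i : Fin (2*n)) (D : OrientedChordDiagram n) : Prop :=
  (∀ u, Crosses D.1 i u → OverD D i u) ∨ (∀ u, Crosses D.1 i u → OverD D u i)

lemma pr_inj {m : ℕ} (r s t : Fin m) (h : pr r s = pr r t) : s = t := by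
  unfold pr at h
  simp only [Prod.mk.injEq, Fin.ext_iff, Fin.coe_min, Fin.coe_max] at h ⊢
  omega

lemma card_good {n k : ℕ} (hk : 1 ≤ k) (i : Fin (2*n)) (C : ChordDiagram n)
    (hc : (arc i (C.1 i)).card = k)
    (hg : ∀ u ∈ arc i (C.1 i), C.1 u ∉ arc i (C.1 i)) :
    (univ.filter fun s : Fin (2*n) → Fin (2*n) → Bool => Mono i (C, s)).card * 2 ^ k
      = 2 * Fintype.card (Fin (2*n) → Fin (2*n) → Bool) := by
  set T := arc i (C.1 i) with hT
  set p : Fin (2*n) → Fin (2*n) × Fin (2*n) := fun u => pr (chordRep C i) (chordRep C u) with hp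
  have hinj : Set.InjOn p T := by
    intro u hu v hv huv
    rcases rep_eq C _ _ (pr_inj _ _ _ huv) with e | e
    · exact e
    · exact absurd (e ▸ hu) (hg v hv)
  have hcr : ∀ u ∈ T, Crosses C i u := fun u hu =>
    (crosses_iff C i u).2 (Or.inl ⟨hu, hg u hu⟩)
  have hP : (T.image p).card = k := by rw [Finset.card_image_of_injOn hinj, hc]
  set g : Fin (2*n) × Fin (2*n) → Bool := fun q => decide (q.1 = chordRep C i) with hgd
  have key : ∀ (s : Fin (2*n) → Fin (2*n) → Bool) (g' : Fin (2*n) × Fin (2*n) → Bool)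
      (R : Fin (2*n) → Prop), (∀ u, Crosses C i u → (R u ↔ s (p u).1 (p u).2 = g' (p u))) →
      ((∀ u, Crosses C i u → R u) ↔ ∀ q ∈ T.image p, s q.1 q.2 = g' q) := by
    intro s g' R hR
    rw [Finset.forall_mem_image]
    constructor
    · intro h u hu
      exact (hR u (hcr u hu)).1 (h u (hcr u hu))
    · intro h u hu
      rw [hR u hu]
      rcases (crosses_iff C i u).1 hu with h' | h'
      · exact h h'.1
      · have := h h'.1
        simpa only [hp, rep_inv] using this
  have e : (univ.filter fun s : Fin (2*n) → Fin (2*n) → Bool => Mono i (C, s)) =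
      (univ.filter fun s => ∀ q ∈ T.image p, s q.1 q.2 = g q) ∪
      (univ.filter fun s => ∀ q ∈ T.image p, s q.1 q.2 = (fun q => !g q) q) := by
    rw [← Finset.filter_or]
    refine Finset.filter_congr fun s _ => ?_
    unfold Mono
    rw [key s g _ (fun u hu => over_iff (C, s) i u hu),
      key s (fun q => !g q) _ (fun u hu => under_iff (C, s) i u hu)]
  rw [e, Finset.card_union_of_disjoint, add_mul]
  · have h1 := card_bits2 (T.image p) g
    have h2 := card_bits2 (T.image p) (fun q => !g q)
    rw [hP] at h1 h2
    rw [two_mul (Fintype.card _)]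
    refine congrArg₂ _ ?_ ?_
    · convert h1
    · convert h2
  · rw [Finset.disjoint_filter]
    intro s _ h1 h2
    have : (T.image p).Nonempty := by rw [← Finset.card_pos]; omega
    obtain ⟨q, hq⟩ := this
    have a := h1 q hq
    have b := h2 q hq
    rw [a] at b
    simp at b

lemma card_bad {n k : ℕ} (hn : 2 ≤ n) (i j : Fin (2*n)) (hij : j ≠ i) (hc : (arc i j).card = k) :
    (2*n - 3) * (univ.filter fun C : ChordDiagram n => C.1 i = j ∧
      ∃ u ∈ arc i j, C.1 u ∈ arc i j).card ≤
    k^2 * (univ.filter fun C : ChordDiagram n => C.1 i = j).card := by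
  have n1 : ∀ u ∈ arc i j, u ≠ i := by
    rintro u hu rfl; simp [mem_arc] at hu; order
  have n2 : ∀ u ∈ arc i j, u ≠ j := by
    rintro u hu rfl; simp [mem_arc] at hu; order
  have hsub : (univ.filter fun C : ChordDiagram n => C.1 i = j ∧
      ∃ u ∈ arc i j, C.1 u ∈ arc i j) ⊆ (arc i j ×ˢ arc i j).biUnion
      (fun q => univ.filter fun C : ChordDiagram n => C.1 i = j ∧ C.1 q.1 = q.2) := by
    intro C hC
    simp only [mem_filter, mem_univ, true_and, mem_biUnion, mem_product] at hC ⊢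
    obtain ⟨h, u, hu, hv⟩ := hC
    exact ⟨(u, C.1 u), ⟨hu, hv⟩, h, rfl⟩
  calc _ ≤ (2*n-3) * ∑ q ∈ arc i j ×ˢ arc i j,
        (univ.filter fun C : ChordDiagram n => C.1 i = j ∧ C.1 q.1 = q.2).card :=
        Nat.mul_le_mul_left _ ((Finset.card_le_card hsub).trans Finset.card_biUnion_le)
    _ = ∑ q ∈ arc i j ×ˢ arc i j, (2*n-3) * 
        (univ.filter fun C : ChordDiagram n => C.1 i = j ∧ C.1 q.1 = q.2).card := by
        rw [Finset.mul_sum]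
    _ ≤ ∑ q ∈ arc i j ×ˢ arc i j, (univ.filter fun C : ChordDiagram n => C.1 i = j).card := by
        refine Finset.sum_le_sum fun q hq => ?_
        rw [mem_product] at hq
        by_cases h : q.2 = q.1
        · have : (univ.filter fun C : ChordDiagram n => C.1 i = j ∧ C.1 q.1 = q.2) = ∅ := by
            rw [Finset.filter_eq_empty_iff]
            rintro C _ ⟨_, h'⟩
            exact C.2.2 q.1 (h'.trans h)
          rw [this]; simp
        · exact (card2 i j q.1 q.2 hij (n1 _ hq.1) (n2 _ hq.1) (n1 _ hq.2) (n2 _ hq.2) h).ge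
    _ = _ := by rw [Finset.sum_const, Finset.card_product, hc]; simp [sq]

lemma term {n k : ℕ} (hn : 2 ≤ n) (hk : 1 ≤ k) (hkn : k + 1 < 2*n) (i : Fin (2*n)) :
    |probD n (fun D => ((D.1.1 i : ℕ) = ((i : ℕ) + k + 1) % (2*n)) ∧
          ((∀ u, Crosses D.1 i u → OverD D i u) ∨ (∀ u, Crosses D.1 i u → OverD D u i)))
      - (2:ℝ) ^ (1 - (k:ℤ)) / (2*n-1)| ≤ (k:ℝ)^2 / ((2*n-1) * (2*n-3)) := by
  obtain ⟨j, hj⟩ : ∃ j : Fin (2*n), (j:ℕ) = ((i:ℕ)+k+1) % (2*n) :=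
    ⟨⟨((i:ℕ)+k+1) % (2*n), Nat.mod_lt _ (by omega)⟩, rfl⟩
  have hij : j ≠ i := by
    intro h
    rw [h] at hj
    have := i.2
    rcases lt_or_ge ((i:ℕ)+k+1) (2*n) with h' | h'
    · rw [Nat.mod_eq_of_lt h'] at hj; omega
    · rw [Nat.mod_eq_sub_mod h', Nat.mod_eq_of_lt (by omega)] at hj; omega
  have hc := card_arc i j hkn hj
  set M : ℕ := Fintype.card (Fin (2*n) → Fin (2*n) → Bool) with hM
  set F : Finset (ChordDiagram n) := univ.filter fun C => C.1 i = j with hF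
  set w : ChordDiagram n → ℕ := fun C =>
    (univ.filter fun s : Fin (2*n) → Fin (2*n) → Bool => Mono i (C, s)).card with hw
  have hcount : (univ.filter fun D : OrientedChordDiagram n =>
      ((D.1.1 i : ℕ) = ((i : ℕ) + k + 1) % (2*n)) ∧
          ((∀ u, Crosses D.1 i u → OverD D i u) ∨ (∀ u, Crosses D.1 i u → OverD D u i))).card
      = ∑ C ∈ F, w C := by
    have : (univ.filter fun D : OrientedChordDiagram n =>
      ((D.1.1 i : ℕ) = ((i : ℕ) + k + 1) % (2*n)) ∧
          ((∀ u, Crosses D.1 i u → OverD D i u) ∨ (∀ u, Crosses D.1 i u → OverD D u i)))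
        = (F.sigma fun C => univ.filter fun s => Mono i (C, s)).map
          (Equiv.sigmaEquivProd _ _).toEmbedding := by
      ext D
      simp only [mem_filter, mem_univ, true_and, Finset.mem_map_equiv, mem_sigma, hF,
        ← hj, Fin.ext_iff]
      rfl
    rw [this, Finset.card_map, Finset.card_sigma]
  have hprob : probD n (fun D => ((D.1.1 i : ℕ) = ((i : ℕ) + k + 1) % (2*n)) ∧
          ((∀ u, Crosses D.1 i u → OverD D i u) ∨ (∀ u, Crosses D.1 i u → OverD D u i)))
      = ((∑ C ∈ F, w C : ℕ) : ℝ) / ((univ : Finset (OrientedChordDiagram n)).card : ℝ) := by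
    unfold probD
    rw [← hcount]
    congr!
  rw [hprob]
  have htot : (univ : Finset (OrientedChordDiagram n)).card
      = (univ : Finset (ChordDiagram n)).card * M := by
    rw [Finset.card_univ, Fintype.card_prod, Finset.card_univ]
  rw [htot, card1 i j hij]
  have hFpos : 0 < F.card := by
    have := card_pos n
    rw [card1 i j hij] at this
    exact Nat.pos_of_mul_pos_left this
  have hMpos : 0 < M := Fintype.card_pos
  set B : Finset (ChordDiagram n) := univ.filter fun C => C.1 i = j ∧
      ∃ u ∈ arc i j, C.1 u ∈ arc i j with hB
  have hbad := card_bad hn i j hij hc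
  have hBF : B = F.filter fun C => ∃ u ∈ arc i j, C.1 u ∈ arc i j := by
    rw [hB, hF, Finset.filter_filter]
  have h2n : ((2*n - 1 : ℕ) : ℝ) = 2*n-1 := by rw [Nat.cast_sub (by omega)]; push_cast; ring
  have h3n : ((2*n - 3 : ℕ) : ℝ) = 2*n-3 := by rw [Nat.cast_sub (by omega)]; push_cast; ring
  have hbadR : ((2:ℝ)*n-3) * B.card ≤ (k:ℝ)^2 * F.card := by
    rw [← h3n]; exact_mod_cast hbad
  have hnR : (2:ℝ) ≤ n := by exact_mod_cast hn
  set c : ℝ := (2:ℝ) ^ (1 - (k:ℤ)) with hcdef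
  have hc0 : 0 ≤ c := by positivity
  have hc2 : c * 2 ^ k = 2 := by
    rw [hcdef, zpow_sub₀ (by norm_num)]; simp
  have hc1 : c ≤ 1 := by
    rw [hcdef]; apply zpow_le_one_of_nonpos₀ (by norm_num); omega
  have hmain : |(∑ C ∈ F, (w C : ℝ)) - F.card * (c * M)| ≤ B.card * M := by
    have : (∑ C ∈ F, (w C : ℝ)) - F.card * (c * M) = ∑ C ∈ F, ((w C : ℝ) - c * M) := by
      rw [Finset.sum_sub_distrib, Finset.sum_const, nsmul_eq_mul]
    rw [this]
    refine (Finset.abs_sum_le_sum_abs _ _).trans ?_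
    have hle : ∀ C ∈ F, |(w C : ℝ) - c * M| ≤
        if (∃ u ∈ arc i j, C.1 u ∈ arc i j) then (M:ℝ) else 0 := by
      intro C hC
      have hCj : C.1 i = j := by simpa [hF] using hC
      split_ifs with hb
      · have h1 : (w C : ℝ) ≤ M := by
          exact_mod_cast (Finset.card_filter_le _ _)
        have h0 : (0:ℝ) ≤ w C := by positivity
        have h2 : c * M ≤ M := mul_le_of_le_one_left (by positivity) hc1
        have h3 : 0 ≤ c * M := by positivity
        rw [abs_le]; constructor <;> linarith
      · push Not at hb
        have := card_good hk i C (hCj ▸ hc) (hCj ▸ hb)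
        have hR : (w C : ℝ) * 2 ^ k = 2 * M := by exact_mod_cast this
        have : (w C : ℝ) = c * M := by
          have hp : (2:ℝ)^k ≠ 0 := by positivity
          apply mul_right_cancel₀ hp
          rw [hR, mul_right_comm, hc2]
        rw [this]; simp
    refine (Finset.sum_le_sum hle).trans ?_
    rw [← Finset.sum_filter, ← hBF, Finset.sum_const, nsmul_eq_mul]
  push_cast
  rw [h2n]
  have hMR : (0:ℝ) < M := by exact_mod_cast hMpos
  have hFR : (0:ℝ) < F.card := by exact_mod_cast hFpos
  have p1 : (0:ℝ) < 2*n-1 := by linarith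
  have p3 : (0:ℝ) < 2*n-3 := by linarith
  have e1 : (∑ C ∈ F, (w C : ℝ)) / ((2*n-1) * F.card * M) - c / (2*n-1)
      = ((∑ C ∈ F, (w C : ℝ)) - F.card * (c * M)) / ((2*n-1) * F.card * M) := by
    field_simp
  rw [e1, abs_div, abs_of_pos (a := (2*(n:ℝ)-1) * F.card * M) (by positivity),
    div_le_div_iff₀ (by positivity) (by positivity)]
  calc _ ≤ (B.card * M) * ((2*(n:ℝ)-1) * (2*n-3)) := by gcongr
    _ = ((2*(n:ℝ)-3) * B.card) * (M * (2*n-1)) := by ring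
    _ ≤ ((k:ℝ)^2 * F.card) * (M * (2*n-1)) := by gcongr
    _ = _ := by ring

end S15

theorem stmt15 :
    ∃ A : ℝ, 0 < A ∧ ∀ n k : ℕ, 1 ≤ k → (k : ℝ) ≤ 2 * Real.log n →
      |(∑ i : Fin (2*n), probD n (fun D =>
          ((D.1.1 i : ℕ) = ((i : ℕ) + k + 1) % (2*n)) ∧
          ((∀ u, Crosses D.1 i u → OverD D i u) ∨ (∀ u, Crosses D.1 i u → OverD D u i))))
        - (2:ℝ) ^ (1 - (k:ℤ))| ≤ A * (k:ℝ)^2 / (n:ℝ) := by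
  refine ⟨4, by norm_num, fun n k hk hlog => ?_⟩
  have hk1 : (1:ℝ) ≤ k := by exact_mod_cast hk
  have hn : 2 ≤ n := by
    by_contra h
    have : n = 0 ∨ n = 1 := by omega
    rcases this with rfl | rfl <;> simp at hlog <;> omega
  have hnR : (2:ℝ) ≤ n := by exact_mod_cast hn
  have hkn : k + 1 < 2*n := by
    have := Real.log_lt_sub_one_of_pos (x := n) (by linarith) (by linarith)
    have : (k:ℝ) + 1 < 2*n := by linarith
    exact_mod_cast this
  have hsum := Finset.abs_sum_le_sum_abs (fun i : Fin (2*n) => probD n (fun D =>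
          ((D.1.1 i : ℕ) = ((i : ℕ) + k + 1) % (2*n)) ∧
          ((∀ u, Crosses D.1 i u → OverD D i u) ∨ (∀ u, Crosses D.1 i u → OverD D u i)))
          - (2:ℝ) ^ (1 - (k:ℤ)) / (2*n-1)) univ
  have hsum2 := hsum.trans (Finset.sum_le_sum fun i _ => S15.term hn hk hkn i)
  rw [Finset.sum_sub_distrib, Finset.sum_const, Finset.sum_const] at hsum2
  simp only [card_univ, Fintype.card_fin, nsmul_eq_mul] at hsum2
  push_cast at hsum2
  generalize (∑ i : Fin (2*n), probD n (fun D =>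
          ((D.1.1 i : ℕ) = ((i : ℕ) + k + 1) % (2*n)) ∧
          ((∀ u, Crosses D.1 i u → OverD D i u) ∨ (∀ u, Crosses D.1 i u → OverD D u i)))) = S
    at hsum2 ⊢
  have hc0 : 0 ≤ (2:ℝ) ^ (1 - (k:ℤ)) := by positivity
  have hc1 : (2:ℝ) ^ (1 - (k:ℤ)) ≤ 1 := by
    apply zpow_le_one_of_nonpos₀ (by norm_num); omega
  generalize (2:ℝ) ^ (1 - (k:ℤ)) = c at *
  have p1 : (0:ℝ) < 2*n-1 := by linarith
  have p3 : (0:ℝ) < 2*n-3 := by linarith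
  have hn0 : (0:ℝ) < n := by linarith
  have e1 : 2 * (n:ℝ) * (c / (2*n-1)) = c + c / (2*n-1) := by field_simp; ring
  have b1 : c / (2*n-1) ≤ (k:ℝ)^2 / n := by
    rw [div_le_div_iff₀ p1 hn0]
    have : (1:ℝ) ≤ (k:ℝ)^2 := by nlinarith
    nlinarith
  have b0 : 0 ≤ c / (2*n-1) := by positivity
  have b2 : 2 * (n:ℝ) * ((k:ℝ)^2 / ((2*n-1) * (2*n-3))) ≤ 3 * (k:ℝ)^2 / n := by
    rw [← mul_div_assoc, div_le_div_iff₀ (by positivity) hn0]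
    have : 2 * (n:ℝ) * n ≤ 3 * ((2*n-1) * (2*n-3)) := by nlinarith
    calc _ = (k:ℝ)^2 * (2 * (n:ℝ) * n) := by ring
      _ ≤ (k:ℝ)^2 * (3 * ((2*n-1) * (2*n-3))) := by gcongr
      _ = _ := by ring
  rw [e1] at hsum2
  have b3 : 4 * (k:ℝ)^2 / n = 3 * (k:ℝ)^2 / n + (k:ℝ)^2 / n := by ring
  rw [b3]
  rw [abs_le] at *
  constructor <;> linarith [hsum2.1, hsum2.2]
end
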